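/- arXiv:math/0508326 — 4 statements merged into one kernel-verified Lean document; each statement's English description precedes it below -/
import Mathlib

section
/- Let k be an algebraically closed field of characteristic 0, let r ≥ 2, and let F ∈ k[z_1,…,z_{r+2}] be an irreducible homogeneous polynomial of degree at least 3 defining the integral hypersurface Z = {F = 0} ⊂ P^{r+1}. Suppose the singular locus of Z has codimension at least three in Z; i.e. the Krull dimension of k[z_1,…,z_{r+2}]/(F, ∂F/∂z_1, …, ∂F/∂z_{r+2}) is at most r−2. Then only finitely many r-dimensional k-linear subspaces of k^{r+2} are contained in {z ∈ k^{r+2} : F(z) = 0} (i.e. only finitely many (r−1)-planes lie on Z). -/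
open MvPolynomial

namespace PlanesAux

lemma chain_rule {k σ τ : Type*} [Field k] [Fintype σ] (g : σ → MvPolynomial τ k) (t : τ)
    (F : MvPolynomial σ k) :
    pderiv t (aeval g F) = ∑ j, aeval g (pderiv j F) * pderiv t (g j) := by
  classical
  induction F using MvPolynomial.induction_on with
  | C a => simp
  | add p q hp hq => simp only [map_add, hp, hq, add_mul, Finset.sum_add_distrib]
  | mul_X p n hp =>
    simp only [map_mul, aeval_X, Derivation.leibniz, hp, smul_eq_mul, map_add, pderiv_X, add_mul,
      Finset.sum_add_distrib, Finset.mul_sum]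
    congr 1
    · rw [Finset.sum_eq_single n]
      · simp
      · intro b _ hb
        simp [hb.symm]
      · simp
    · exact Finset.sum_congr rfl fun j _ => by ring

lemma taylor {k σ : Type*} [Field k] [Fintype σ] (p : σ → k) (f : MvPolynomial σ k) :
    f - C (eval p f) - ∑ i, C (eval p (pderiv i f)) * (X i - C (p i)) ∈
      (RingHom.ker (eval p)) ^ 2 := by
  classical
  have hX : ∀ i, (X i - C (p i) : MvPolynomial σ k) ∈ RingHom.ker (eval p) := by
    intro i; simp [RingHom.mem_ker]
  induction f using MvPolynomial.induction_on with
  | C a => simp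
  | add f g hf hg =>
    convert add_mem hf hg using 1
    simp only [map_add, add_mul, Finset.sum_add_distrib]
    ring
  | mul_X f n hf =>
    have h1 := Ideal.mul_mem_right (X n) _ hf
    have h2 : (∑ i, C (eval p (pderiv i f)) * (X i - C (p i))) * (X n - C (p n)) ∈
        (RingHom.ker (eval p)) ^ 2 := by
      rw [pow_two]
      refine Ideal.mul_mem_mul (Ideal.sum_mem _ fun i _ => Ideal.mul_mem_left _ _ (hX i)) (hX n)
    convert add_mem h1 h2 using 1
    have : ∑ i, C (eval p (pderiv i (f * X n))) * (X i - C (p i)) =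
        C (eval p f) * (X n - C (p n)) +
        C (p n) * ∑ i, C (eval p (pderiv i f)) * (X i - C (p i)) := by
      simp only [Derivation.leibniz, smul_eq_mul, pderiv_X, map_add, map_mul, eval_X, add_mul,
        Finset.sum_add_distrib, Finset.mul_sum]
      congr 1
      · rw [Finset.sum_eq_single n]
        · simp
        · intro b _ hb
          simp [hb.symm]
        · simp
      · exact Finset.sum_congr rfl fun j _ => by ring
    rw [this]
    simp only [map_mul, eval_X]
    ring

lemma finite_of_tangent {k σ : Type*} [Field k] [Fintype σ] (S : Set (MvPolynomial σ k))
    (h : ∀ p : σ → k, (∀ f ∈ S, eval p f = 0) → ∀ v : σ → k,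
      (∀ f ∈ S, ∑ i, eval p (pderiv i f) * v i = 0) → v = 0) :
    {p : σ → k | ∀ f ∈ S, eval p f = 0}.Finite := by
  classical
  have hfin := Ideal.finite_minimalPrimes_of_isNoetherianRing (MvPolynomial σ k) (Ideal.span S)
  refine Set.Finite.of_finite_image (f := fun p : σ → k => RingHom.ker (eval p))
    (hfin.subset ?_) ?_
  · rintro _ ⟨p, hp, rfl⟩
    have hJM : Ideal.span S ≤ RingHom.ker (eval p) := by
      rw [Ideal.span_le]; intro f hf; exact hp f hf
    have hprime : (RingHom.ker (eval p)).IsPrime := RingHom.ker_isPrime _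
    let D : MvPolynomial σ k →ₗ[k] (σ → k) :=
      LinearMap.pi fun i => (aeval p : MvPolynomial σ k →ₐ[k] k).toLinearMap ∘ₗ
        (pderiv i : Derivation k (MvPolynomial σ k) (MvPolynomial σ k)).toLinearMap
    have hD : ∀ f i, D f i = eval p (pderiv i f) := by
      intro f i; simp [D, aeval_eq_eval]
    have htop : ((Ideal.span S).restrictScalars k).map D = ⊤ := by
      by_contra hne
      obtain ⟨φ, hφ, hφ0⟩ := Submodule.exists_dual_map_eq_bot_of_lt_top
        (lt_top_iff_ne_top.2 hne) inferInstance
      apply hφ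
      have key := h p hp (fun i => φ (Pi.single i 1)) (by
        intro f hf
        have : φ (D f) = 0 := by
          have : φ (D f) ∈ Submodule.map φ (((Ideal.span S).restrictScalars k).map D) :=
            Submodule.mem_map_of_mem (Submodule.mem_map_of_mem (Ideal.subset_span hf))
          rw [hφ0] at this
          exact (Submodule.mem_bot k).1 this
        rw [pi_eq_sum_univ' (D f), map_sum] at this
        simp only [map_smul, hD, smul_eq_mul] at this
        rw [← this])
      apply LinearMap.pi_ext'
      intro i
      ext
      exact congrFun key i
    have hle : RingHom.ker (eval p) ≤ Ideal.span S ⊔ RingHom.ker (eval p) • RingHom.ker (eval p) := by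
      intro x hx
      have : D x ∈ ((Ideal.span S).restrictScalars k).map D := by rw [htop]; trivial
      obtain ⟨f, hf, hfx⟩ := this
      have h1 := taylor p (x - f)
      have h2 : eval p (x - f) = 0 := by
        have := hJM hf
        rw [RingHom.mem_ker] at this hx
        simp [this, hx]
      have h3 : ∀ i, eval p (pderiv i (x - f)) = 0 := by
        intro i
        rw [← hD, map_sub, hfx]; simp
      simp only [h2, h3, map_zero, zero_mul, Finset.sum_const_zero, sub_zero] at h1
      rw [← add_sub_cancel f x]
      refine Submodule.add_mem_sup hf ?_
      rwa [smul_eq_mul, ← pow_two]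
    obtain ⟨a, ha, haP⟩ := Submodule.exists_sub_one_mem_and_smul_le_of_fg_of_le_sup
      (IsNoetherian.noetherian (RingHom.ker (eval p))) le_rfl hle
    refine ⟨⟨hprime, hJM⟩, ?_⟩
    rintro q ⟨hq, hJq⟩ hqM x hx
    have : a * x ∈ q := hJq (haP (Submodule.smul_mem_pointwise_smul x a _ hx))
    rcases hq.mem_or_mem this with h' | h'
    · exfalso
      have h1 := sub_mem (hqM h') ha
      rw [RingHom.mem_ker] at h1
      simp at h1
    · exact h'
  · intro p _ q _ hpq
    funext i
    have : (X i - C (p i) : MvPolynomial σ k) ∈ RingHom.ker (eval q) := by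
      have hpq' : RingHom.ker (eval p) = RingHom.ker (eval q) := hpq
      rw [← hpq']
      simp [RingHom.mem_ker]
    rw [RingHom.mem_ker] at this
    simp only [map_sub, eval_X, eval_C] at this
    exact (sub_eq_zero.1 this).symm

lemma mem_vars_iff {k : Type*} [Field k] {σ : Type*} (f : MvPolynomial σ k) :
    f ∈ idealOfVars σ k ↔ constantCoeff f = 0 := by
  rw [← pow_one (idealOfVars σ k), mem_pow_idealOfVars_iff']
  constructor
  · intro h; exact h 0 (by simp)
  · intro h x hx
    have : x = 0 := by rw [← Finsupp.degree_eq_zero_iff]; omega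
    subst this; exact h

lemma vars_eq_ker {k : Type*} [Field k] {σ : Type*} :
    idealOfVars σ k = RingHom.ker (constantCoeff : MvPolynomial σ k →+* k) := by
  ext f; rw [mem_vars_iff, RingHom.mem_ker]

lemma vars_isMaximal {k : Type*} [Field k] {σ : Type*} : (idealOfVars σ k).IsMaximal := by
  rw [vars_eq_ker]
  exact RingHom.ker_isMaximal_of_surjective _ (fun a => ⟨C a, by simp⟩)

lemma height_vars {k : Type*} [Field k] (n : ℕ) : (n : ℕ∞) ≤ (idealOfVars (Fin n) k).height := by
  classical
  let φ : ℕ → (MvPolynomial (Fin n) k →ₐ[k] MvPolynomial (Fin n) k) := fun i =>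
    aeval fun j => if j.1 < i then 0 else X j
  have hφ : ∀ i j, i ≤ j → (φ j).comp (φ i) = φ j := by
    intro i j hij
    ext1 l
    simp only [φ, AlgHom.comp_apply, aeval_X]
    split_ifs with h1 h2 h2
    · simp
    · omega
    · simp [h2]
    · simp [h2]
  let P : ℕ → PrimeSpectrum (MvPolynomial (Fin n) k) := fun i =>
    ⟨RingHom.ker (φ i), RingHom.ker_isPrime _⟩
  let c : LTSeries (PrimeSpectrum (MvPolynomial (Fin n) k)) :=
    LTSeries.mk n (fun i => P i) (by
      intro i j hij
      have hij' : i.1 < j.1 := hij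
      refine lt_of_le_not_ge ?_ ?_
      · intro f hf
        have hf' : φ i f = 0 := hf
        change φ j f = 0
        rw [← hφ i j hij'.le, AlgHom.comp_apply, hf', map_zero]
      · intro hle
        have hi : i.1 < n := by omega
        have h1 : (X ⟨i.1, hi⟩ : MvPolynomial (Fin n) k) ∈ (P j).asIdeal := by
          change φ j _ = 0
          simp [φ, hij]
        have h2 : φ i (X ⟨i.1, hi⟩) = 0 := hle h1
        simp [φ] at h2)
  have hlast : (RelSeries.last c).asIdeal ≤ idealOfVars (Fin n) k := by
    intro f hf
    have hf' : φ n f = 0 := hf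
    rw [mem_vars_iff]
    have : (constantCoeff : MvPolynomial (Fin n) k →+* k).comp (φ n).toRingHom = constantCoeff := by
      apply MvPolynomial.ringHom_ext
      · intro a; simp [φ]
      · intro i; simp [φ]
    rw [← this]
    simp [hf']
  have hm := (vars_isMaximal (k := k) (σ := Fin n)).isPrime
  calc (n : ℕ∞) ≤ Order.height (RelSeries.last c) := Order.length_le_height_last (p := c)
    _ = (RelSeries.last c).asIdeal.height := by
      exact (PrimeSpectrum.height_eq_orderHeight _).symm
    _ ≤ _ := Ideal.height_mono hlast

lemma exists_chart {k : Type*} [Field k] {n r : ℕ} (W : Submodule k (Fin n → k))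
    (hW : Module.finrank k W = r) :
    ∃ (s : Fin r → Fin n) (M : Fin n × Fin r → k),
      (∀ i j, M (s i, j) = if i = j then 1 else 0) ∧
      (W : Set (Fin n → k)) = Set.range fun z : Fin r → k => fun j => ∑ i, z i * M (j, i) := by
  classical
  let v : Fin n → Module.Dual k W := fun j => LinearMap.proj j ∘ₗ W.subtype
  obtain ⟨κ, a, ha, hspan, hli⟩ := exists_linearIndependent' k v
  have hv : Submodule.span k (Set.range v) = ⊤ := by
    by_contra hne
    obtain ⟨φ, hφ, hφ0⟩ := Submodule.exists_dual_map_eq_bot_of_lt_top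
        (lt_top_iff_ne_top.2 hne) inferInstance
    apply hφ
    obtain ⟨w, rfl⟩ := (Module.evalEquiv k W).surjective φ
    have : w = 0 := by
      ext j
      have : Module.evalEquiv k W w (v j) ∈ Submodule.map (Module.evalEquiv k W w)
        (Submodule.span k (Set.range v)) :=
          Submodule.mem_map_of_mem (Submodule.subset_span ⟨j, rfl⟩)
      rw [hφ0] at this
      exact (Submodule.mem_bot k).1 this
    simp [this]
  rw [hv] at hspan
  have : Fintype κ := @Fintype.ofFinite κ (Finite.of_injective a ha)
  let b := Module.Basis.mk hli hspan.ge
  have hcard : Fintype.card κ = r := by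
    rw [← Module.finrank_eq_card_basis b, Subspace.dual_finrank_eq, hW]
  let e : Fin r ≃ κ := (Fintype.equivFinOfCardEq hcard).symm
  let π : W →ₗ[k] (Fin r → k) := LinearMap.pi fun i => v (a (e i))
  have hπ : Function.Injective π := by
    rw [← LinearMap.ker_eq_bot, LinearMap.ker_eq_bot']
    intro w hw
    have h1 : ∀ f ∈ Submodule.span k (Set.range (v ∘ a)), f w = 0 := by
      intro f hf
      induction hf using Submodule.span_induction with
      | mem x hx =>
        obtain ⟨c, rfl⟩ := hx
        have := congrFun hw (e.symm c)
        simpa [π] using this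
      | zero => simp
      | add x y _ _ hx hy => simp [hx, hy]
      | smul c x _ hx => simp [hx]
    ext j
    exact h1 (v j) (by rw [hspan]; trivial)
  let E : W ≃ₗ[k] (Fin r → k) := LinearEquiv.ofInjectiveOfFinrankEq π hπ (by simp [hW])
  have hE : ∀ w i, E w i = w.1 (a (e i)) := fun w i => rfl
  refine ⟨fun i => a (e i), fun q => (E.symm (Pi.single q.2 1)).1 q.1, ?_, ?_⟩
  · intro i j
    change (E.symm (Pi.single j 1)).1 (a (e i)) = _
    rw [← hE, LinearEquiv.apply_symm_apply, Pi.single_apply]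
  · have key : ∀ z : Fin r → k, (fun j => ∑ i, z i * (E.symm (Pi.single i 1)).1 j) = (E.symm z).1 := by
      intro z
      conv_rhs => rw [pi_eq_sum_univ' z]
      ext j
      simp [map_sum, Finset.sum_apply]
    ext w
    constructor
    · intro hw
      exact ⟨E ⟨w, hw⟩, by simp only [key]; simp⟩
    · rintro ⟨z, rfl⟩
      simp only [key]
      exact (E.symm z).2

end PlanesAux

namespace PlanesAux

lemma lin_eq_zero {k : Type*} [Field k] {r : ℕ} (c : Fin r → k)
    (h : (∑ i, C (c i) * X i : MvPolynomial (Fin r) k) ∈ idealOfVars (Fin r) k ^ 2) : c = 0 := by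
  classical
  rw [mem_pow_idealOfVars_iff'] at h
  funext i
  have := h (Finsupp.single i 1) (by simp)
  rw [coeff_sum, Finset.sum_eq_single i] at this
  · simpa [coeff_C_mul] using this
  · intro j _ hj
    rw [coeff_C_mul, coeff_X, if_neg, mul_zero]
    intro h'
    exact hj (Finsupp.single_left_injective one_ne_zero h')
  · simp

lemma mem_sq_of_mul {k : Type*} [Field k] {σ : Type*} {g a : MvPolynomial σ k}
    (hg : g ∉ idealOfVars σ k) (h : g * a ∈ idealOfVars σ k ^ 2) : a ∈ idealOfVars σ k ^ 2 := by
  have hm := vars_isMaximal (k := k) (σ := σ)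
  obtain ⟨u, m, hm', hu⟩ := hm.exists_inv hg
  have e : a = (u ^ 2 * g + 2 * u * m) * (g * a) + m ^ 2 * a := by
    linear_combination (-(u * g + m) - 1) * a * hu
  rw [e]
  exact add_mem (Ideal.mul_mem_left _ _ h) (Ideal.mul_mem_right _ _ (Ideal.pow_mem_pow hm' 2))

/-- the key algebraic lemma -/
lemma key {k : Type*} [Field k] {r : ℕ} (a b : MvPolynomial (Fin r) k)
    (ha : a ∈ idealOfVars (Fin r) k ^ 2) (hb : b ∈ idealOfVars (Fin r) k ^ 2)
    (c e : Fin r → k)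
    (h : a * (∑ i, C (c i) * X i) + b * (∑ i, C (e i) * X i) = 0)
    (hg : ∀ g ∈ idealOfVars (Fin r) k, g ∣ a → g ∣ b → False) : c = 0 ∧ e = 0 := by
  by_cases ha0 : a = 0 ∧ b = 0
  · exact (hg 0 (zero_mem _) (by simp [ha0.1]) (by simp [ha0.2])).elim
  have hex : ∃ a' b' g : MvPolynomial (Fin r) k, IsRelPrime a' b' ∧ g * a' = a ∧ g * b' = b := by
    by_cases h0 : a = 0
    · obtain ⟨b', a', g, h1, h2, h3⟩ := UniqueFactorizationMonoid.exists_reduced_factors b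
        (fun hb0 => ha0 ⟨h0, hb0⟩) a
      exact ⟨a', b', g, h1.symm, h3, h2⟩
    · exact UniqueFactorizationMonoid.exists_reduced_factors a h0 b
  obtain ⟨a', b', g, hrel, rfl, rfl⟩ := hex
  have hgm : g ∉ idealOfVars (Fin r) k := fun hm => hg g hm (dvd_mul_right _ _) (dvd_mul_right _ _)
  have hg0 : g ≠ 0 := by rintro rfl; exact hgm (zero_mem _)
  have ha' := mem_sq_of_mul hgm ha
  have hb' := mem_sq_of_mul hgm hb
  have h2 : a' * (∑ i, C (c i) * X i) + b' * (∑ i, C (e i) * X i) = 0 := by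
    apply mul_left_cancel₀ hg0
    rw [mul_zero, ← h]; ring
  constructor
  · apply lin_eq_zero
    have : b' ∣ ∑ i, C (c i) * X i := by
      apply hrel.symm.dvd_of_dvd_mul_left
      exact ⟨-(∑ i, C (e i) * X i), by linear_combination h2⟩
    exact Ideal.mem_of_dvd _ this hb'
  · apply lin_eq_zero
    have : a' ∣ ∑ i, C (e i) * X i := by
      apply hrel.dvd_of_dvd_mul_left
      exact ⟨-(∑ i, C (c i) * X i), by linear_combination h2⟩
    exact Ideal.mem_of_dvd _ this ha'

lemma tangent {k : Type*} [Field k] [Infinite k] (r : ℕ)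
    (d : ℕ) (hd : 3 ≤ d) (F : MvPolynomial (Fin (r + 2)) k)
    (hhom : F.IsHomogeneous d)
    (hsing : ringKrullDim (MvPolynomial (Fin (r + 2)) k ⧸
        Ideal.span ({F} ∪ Set.range fun i => pderiv i F)) + 2 ≤ (r : WithBot ℕ∞))
    (s : Fin r → Fin (r + 2)) (M N : Fin (r + 2) × Fin r → k)
    (hM : ∀ i j, M (s i, j) = if i = j then 1 else 0) (hN : ∀ i j, N (s i, j) = 0)
    (hF : ∀ z : Fin r → k, eval (fun j => ∑ i, z i * M (j, i)) F = 0)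
    (hT : ∀ z : Fin r → k, ∑ j, eval (fun j => ∑ i, z i * M (j, i)) (pderiv j F) *
      (∑ i, z i * N (j, i)) = 0) : N = 0 := by
  classical
  let L : Fin (r + 2) → MvPolynomial (Fin r) k := fun j => ∑ i, C (M (j, i)) * X i
  have hL : ∀ z j, eval z (L j) = ∑ i, z i * M (j, i) := by
    intro z j
    simp [L, mul_comm]
  have hev : ∀ z (f : MvPolynomial (Fin (r + 2)) k),
      eval z (aeval L f) = eval (fun j => ∑ i, z i * M (j, i)) f := by
    intro z f
    simp only [← hL]
    induction f using MvPolynomial.induction_on with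
    | C a => simp
    | add p q hp hq => simp only [map_add, hp, hq]
    | mul_X p n hp => simp only [map_mul, hp, aeval_X, eval_X]
  have hLs : ∀ i, L (s i) = X i := by
    intro i; simp [L, hM]
  let G : Fin (r + 2) → MvPolynomial (Fin r) k := fun j => aeval L (pderiv j F)
  have hF0 : aeval L F = 0 := by
    apply MvPolynomial.funext
    intro z; rw [hev, hF, map_zero]
  have hGT : ∑ j, G j * (∑ i, C (N (j, i)) * X i) = 0 := by
    apply MvPolynomial.funext
    intro z
    rw [map_zero, ← hT z, map_sum]
    refine Finset.sum_congr rfl fun j _ => ?_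
    rw [map_mul, hev]
    simp [mul_comm]
  have hGM : ∀ i, ∑ j, G j * C (M (j, i)) = 0 := by
    intro i
    have h1 := chain_rule L i F
    rw [hF0, map_zero] at h1
    rw [h1]
    refine Finset.sum_congr rfl fun j _ => ?_
    congr 1
    simp [L, pderiv_X, Pi.single_apply]
  have hG2 : ∀ j, G j ∈ idealOfVars (Fin r) k ^ 2 := by
    intro j
    have h1 : (G j).IsHomogeneous (1 * (d - 1)) :=
      (hhom.pderiv (i := j)).aeval L fun j => IsHomogeneous.sum _ _ _ fun i _ => by
        simpa using (isHomogeneous_C _ (M (j, i))).mul (isHomogeneous_X k i)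
    rw [mem_pow_idealOfVars_iff']
    intro x hx
    exact h1.coeff_eq_zero (by omega)
  have hs : Function.Injective s := by
    intro i j hij
    by_contra hne
    have h1 := hM i j
    rw [hij, hM, if_pos rfl, if_neg hne] at h1
    exact one_ne_zero h1
  have hcard : (Finset.univ.image s)ᶜ.card = 2 := by
    rw [Finset.card_compl, Finset.card_image_of_injective _ hs]; simp
  obtain ⟨p, q, hpq, hcompl⟩ := Finset.card_eq_two.1 hcard
  have hsplit : ∀ f : Fin (r + 2) → MvPolynomial (Fin r) k,
      ∑ j, f j = (∑ i, f (s i)) + (f p + f q) := by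
    intro f
    rw [← Finset.sum_add_sum_compl (Finset.univ.image s) f, hcompl, Finset.sum_pair hpq,
      Finset.sum_image (fun _ _ _ _ h => hs h)]
  have hcases : ∀ j, j = p ∨ j = q ∨ ∃ i, j = s i := by
    intro j
    by_cases hj : j ∈ Finset.univ.image s
    · obtain ⟨i, _, rfl⟩ := Finset.mem_image.1 hj
      exact Or.inr (Or.inr ⟨i, rfl⟩)
    · have : j ∈ (Finset.univ.image s)ᶜ := by simpa using hj
      rw [hcompl] at this
      simp at this
      tauto
  have hGs : ∀ i, G (s i) = -(G p * C (M (p, i)) + G q * C (M (q, i))) := by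
    intro i
    have h1 := hGM i
    rw [hsplit] at h1
    have h2 : ∑ l, G (s l) * C (M (s l, i)) = G (s i) := by
      simp [hM]
    rw [h2] at h1
    linear_combination h1
  have hpqN : G p * (∑ i, C (N (p, i)) * X i) + G q * (∑ i, C (N (q, i)) * X i) = 0 := by
    rw [hsplit] at hGT
    simpa [hN] using hGT
  obtain ⟨h1, h2⟩ := key (G p) (G q) (hG2 p) (hG2 q) (fun i => N (p, i)) (fun i => N (q, i)) hpqN (by
    intro g hg hgp hgq
    have hall : ∀ j, g ∣ G j := by
      intro j
      rcases hcases j with rfl | rfl | ⟨i, rfl⟩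
      · exact hgp
      · exact hgq
      · rw [hGs, dvd_neg]
        exact dvd_add (hgp.mul_right _) (hgq.mul_right _)
    have hle : Ideal.span ({F} ∪ Set.range fun i => pderiv i F) ≤
        (Ideal.span {g}).comap (aeval L : _ →ₐ[k] MvPolynomial (Fin r) k).toRingHom := by
      rw [Ideal.span_le]
      rintro x (hx | ⟨i, rfl⟩)
      · rw [Set.mem_singleton_iff] at hx
        subst hx
        change aeval L x ∈ Ideal.span {g}
        rw [hF0]; exact zero_mem _
      · change G i ∈ Ideal.span {g}
        rw [Ideal.mem_span_singleton]; exact hall i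
    have hsurj : Function.Surjective (aeval L : _ →ₐ[k] MvPolynomial (Fin r) k).toRingHom := by
      intro f
      refine ⟨rename s f, ?_⟩
      change aeval L (rename s f) = f
      rw [aeval_rename]
      have : L ∘ s = X := funext hLs
      rw [this, aeval_X_left_apply]
    have hdim := ringKrullDim_le_of_surjective (Ideal.quotientMap _ _ hle)
      (Ideal.quotientMap_surjective hsurj)
    have hm := (vars_isMaximal (k := k) (σ := Fin r)).isPrime
    have hht := Ideal.height_le_ringKrullDim_quotient_add_one hg
    have hr : (r : WithBot ℕ∞) ≤ ((idealOfVars (Fin r) k).height : WithBot ℕ∞) := by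
      exact_mod_cast height_vars (k := k) r
    have h3 : (r : WithBot ℕ∞) + 1 ≤ r := by
      calc (r : WithBot ℕ∞) + 1 ≤ (ringKrullDim (MvPolynomial (Fin r) k ⧸ Ideal.span {g}) + 1) + 1 := by
            gcongr; exact hr.trans hht
        _ ≤ (ringKrullDim (MvPolynomial (Fin (r + 2)) k ⧸
              Ideal.span ({F} ∪ Set.range fun i => pderiv i F)) + 1) + 1 := by gcongr
        _ ≤ r := by rw [add_assoc, one_add_one_eq_two]; exact hsing
    have h4 : r + 1 ≤ r := by exact_mod_cast h3
    omega)
  funext ⟨j, i⟩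
  rcases hcases j with rfl | rfl | ⟨l, rfl⟩
  · exact congrFun h1 i
  · exact congrFun h2 i
  · exact hN l i

/-- the generic linear forms of the universal chart -/
noncomputable def gen (k : Type*) [Field k] (r : ℕ) (z : Fin r → k) (j : Fin (r + 2)) :
    MvPolynomial (Fin (r + 2) × Fin r) k := ∑ i, C (z i) * X (j, i)

lemma eval_gen {k : Type*} [Field k] {r : ℕ} (M : Fin (r + 2) × Fin r → k) (z : Fin r → k)
    (f : MvPolynomial (Fin (r + 2)) k) :
    eval M (aeval (gen k r z) f) = eval (fun j => ∑ i, z i * M (j, i)) f := by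
  induction f using MvPolynomial.induction_on with
  | C a => simp
  | add p q hp hq => simp only [map_add, hp, hq]
  | mul_X p n hp =>
    simp only [map_mul, hp, aeval_X, eval_X]
    simp [gen]

lemma pderiv_gen {k : Type*} [Field k] {r : ℕ} (z : Fin r → k) (j l : Fin (r + 2)) (i : Fin r) :
    pderiv (j, i) (gen k r z l) = if l = j then C (z i) else 0 := by
  classical
  by_cases h : l = j
  · subst h
    simp [gen, pderiv_X, Pi.single_apply]
  · simp [gen, pderiv_X, h]

/-- equations of a chart -/
def eqs {k : Type*} [Field k] {r : ℕ} (F : MvPolynomial (Fin (r + 2)) k)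
    (s : Fin r → Fin (r + 2)) : Set (MvPolynomial (Fin (r + 2) × Fin r) k) :=
  (Set.range fun z : Fin r → k => aeval (gen k r z) F) ∪
    (Set.range fun q : Fin r × Fin r => X (s q.1, q.2) - C (if q.1 = q.2 then 1 else 0))

lemma eqs_left {k : Type*} [Field k] {r : ℕ} (F : MvPolynomial (Fin (r + 2)) k)
    (s : Fin r → Fin (r + 2)) (z : Fin r → k) : aeval (gen k r z) F ∈ eqs F s :=
  Or.inl ⟨z, rfl⟩

lemma eqs_right {k : Type*} [Field k] {r : ℕ} (F : MvPolynomial (Fin (r + 2)) k)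
    (s : Fin r → Fin (r + 2)) (i j : Fin r) :
    X (s i, j) - C (if i = j then 1 else 0) ∈ eqs F s :=
  Or.inr ⟨(i, j), rfl⟩

lemma sum_pderiv_gen {k : Type*} [Field k] {r : ℕ} (F : MvPolynomial (Fin (r + 2)) k)
    (M N : Fin (r + 2) × Fin r → k) (z : Fin r → k) :
    ∑ q, eval M (pderiv q (aeval (gen k r z) F)) * N q =
    ∑ j, eval (fun j => ∑ i, z i * M (j, i)) (pderiv j F) * (∑ i, z i * N (j, i)) := by
  rw [Fintype.sum_prod_type]
  refine Finset.sum_congr rfl fun j _ => ?_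
  rw [Finset.mul_sum]
  refine Finset.sum_congr rfl fun i _ => ?_
  rw [chain_rule, map_sum, Finset.sum_eq_single j]
  · rw [map_mul, eval_gen, pderiv_gen, if_pos rfl, eval_C, mul_assoc]
  · intro l _ hl
    rw [pderiv_gen, if_neg hl, mul_zero, map_zero]
  · simp

lemma chart_finite {k : Type*} [Field k] [Infinite k] (r : ℕ)
    (d : ℕ) (hd : 3 ≤ d) (F : MvPolynomial (Fin (r + 2)) k)
    (hhom : F.IsHomogeneous d)
    (hsing : ringKrullDim (MvPolynomial (Fin (r + 2)) k ⧸
        Ideal.span ({F} ∪ Set.range fun i => pderiv i F)) + 2 ≤ (r : WithBot ℕ∞))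
    (s : Fin r → Fin (r + 2)) :
    {M : Fin (r + 2) × Fin r → k | ∀ f ∈ eqs F s, eval M f = 0}.Finite := by
  classical
  apply finite_of_tangent
  intro M hM N hN
  refine tangent r d hd F hhom hsing s M N ?_ ?_ ?_ ?_
  · intro i j
    have := hM _ (eqs_right F s i j)
    rw [map_sub, eval_X, eval_C] at this
    exact sub_eq_zero.1 this
  · intro i j
    have := hN _ (eqs_right F s i j)
    simp only [map_sub, pderiv_X, pderiv_C, sub_zero] at this
    rw [Finset.sum_eq_single (s i, j)] at this
    · simpa using this
    · intro b _ hb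
      rw [Pi.single_eq_of_ne (by simpa using hb.symm)]
      simp
    · simp
  · intro z
    rw [← eval_gen]
    exact hM _ (eqs_left F s z)
  · intro z
    rw [← sum_pderiv_gen]
    exact hN _ (eqs_left F s z)

/-- the span of the columns -/
noncomputable def spn {k : Type*} [Field k] {r : ℕ} (M : Fin (r + 2) × Fin r → k) :
    Submodule k (Fin (r + 2) → k) :=
  Submodule.span k (Set.range fun z : Fin r → k => fun j => ∑ i, z i * M (j, i))

lemma main_aux (k : Type*) [Field k] [Infinite k] (r : ℕ)
    (d : ℕ) (hd : 3 ≤ d) (F : MvPolynomial (Fin (r + 2)) k)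
    (hhom : F.IsHomogeneous d)
    (hsing : ringKrullDim (MvPolynomial (Fin (r + 2)) k ⧸
        Ideal.span ({F} ∪ Set.range fun i => pderiv i F)) + 2 ≤ (r : WithBot ℕ∞)) :
    {W : Submodule k (Fin (r + 2) → k) |
      Module.finrank k W = r ∧ ∀ x ∈ W, eval x F = 0}.Finite := by
  have hU : (⋃ s : Fin r → Fin (r + 2), spn '' {M : Fin (r + 2) × Fin r → k |
      ∀ f ∈ eqs F s, eval M f = 0}).Finite :=
    Set.finite_iUnion fun s => (chart_finite r d hd F hhom hsing s).image _
  refine Set.Finite.subset hU ?_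
  rintro W ⟨hW, hWF⟩
  obtain ⟨s, M, hM, hWM⟩ := exists_chart W hW
  refine Set.mem_iUnion.2 ⟨s, M, ?_, ?_⟩
  · rintro f (⟨z, rfl⟩ | ⟨⟨i, j⟩, rfl⟩)
    · refine (eval_gen M z F).trans ?_
      apply hWF
      rw [← SetLike.mem_coe, hWM]
      exact ⟨z, rfl⟩
    · simp only [map_sub, eval_X, eval_C]
      rw [hM, sub_self]
  · rw [spn]
    rw [← hWM, Submodule.span_eq]

end PlanesAux

/-- Proposition 8.3 of Salberger: an integral hypersurface `Z = {F = 0} ⊂ P^{r+1}` of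
degree `≥ 3` over an algebraically closed field of characteristic `0`, whose singular
locus has codimension at least three in `Z`, contains only finitely many `(r-1)`-planes.
The codimension condition is expressed by requiring that the coordinate ring of the
affine cone over the singular locus has Krull dimension at most `r - 2`, and
`(r-1)`-planes correspond to `r`-dimensional linear subspaces of `k^{r+2}` contained in
the affine cone of `Z`. -/
theorem stmt_4 (k : Type*) [Field k] [IsAlgClosed k] [CharZero k] (r : ℕ) (hr : 2 ≤ r)
    (d : ℕ) (hd : 3 ≤ d) (F : MvPolynomial (Fin (r + 2)) k)
    (hhom : F.IsHomogeneous d) (hirr : Irreducible F)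
    (hsing : ringKrullDim (MvPolynomial (Fin (r + 2)) k ⧸
        Ideal.span ({F} ∪ Set.range fun i => pderiv i F)) + 2 ≤ (r : WithBot ℕ∞)) :
    {W : Submodule k (Fin (r + 2) → k) |
      Module.finrank k W = r ∧ ∀ x ∈ W, eval x F = 0}.Finite := by
  exact PlanesAux.main_aux k r d hd F hhom hsing
end

section
/- Let k be an algebraically closed field of characteristic 0, let r ≥ 2, and let d_1, d_2 be positive integers with d_1·d_2 ≥ 4. Let F_1, F_2 ∈ k[z_1,…,z_{r+3}] be homogeneous polynomials of degrees d_1 and d_2 whose common zero locus is Z ⊂ P^{r+2}. Suppose that the ideal generated by F_1 and F_2 in k[z_1,…,z_{r+3}] is prime and that k[z_1,…,z_{r+3}]/(F_1,F_2) has Krull dimension r+1 (so Z is an integral r-dimensional intersection of two hypersurfaces), and that the singular locus of Z has codimension at least three in Z; i.e. the Krull dimension of k[z_1,…,z_{r+3}]/J is at most r−2, where J is generated by F_1, F_2 and all 2×2 minors of the Jacobian matrix of (F_1,F_2). Then only finitely many r-dimensional k-linear subspaces of k^{r+3} are contained in {z ∈ k^{r+3} : F_1(z) = F_2(z) = 0}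 (i.e. only finitely many (r−1)-planes lie on Z). -/
open MvPolynomial

theorem aux_polyheight (R : Type*) [CommRing R] [IsNoetherianRing R] [IsJacobsonRing R]
    (M : Ideal (Polynomial R)) (hM : M.IsMaximal) :
    ∃ P : Ideal R, P.IsMaximal ∧ M.height = P.height + 1 :=
  ⟨M.under R, Polynomial.isMaximal_comap_C_of_isJacobsonRing M,
    Polynomial.height_eq_height_add_one (M.under R) M⟩

theorem aux_height {k : Type*} [Field k] {ι : Type*} [Finite ι]
    (M : Ideal (MvPolynomial ι k)) (hM : M.IsMaximal) : M.height = (Nat.card ι : ℕ∞) := by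
  induction ι using Finite.induction_empty_option with
  | of_equiv e H =>
    let E := (renameEquiv k e).toRingEquiv
    have h1 : (M.comap E).IsMaximal := Ideal.comap_isMaximal_of_equiv E
    have h2 := H (M.comap E) h1
    rw [E.height_comap] at h2
    rw [h2, Nat.card_congr e]
  | h_empty =>
    have hf : IsField (MvPolynomial PEmpty k) :=
      (isEmptyRingEquiv k PEmpty).toMulEquiv.isField (Field.toIsField k)
    let := hf.toField
    have : M = ⊥ := by
      rcases Ideal.eq_bot_or_top M with h | h
      · exact h
      · exact absurd h hM.ne_top
    subst this
    simp
  | @h_option α _ IH =>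
    let E := (optionEquivLeft k α).toRingEquiv
    have h1 : (M.comap E.symm).IsMaximal := Ideal.comap_isMaximal_of_equiv E.symm
    obtain ⟨P, hP, h2⟩ := aux_polyheight (MvPolynomial α k) (M.comap E.symm) h1
    rw [E.symm.height_comap, IH P hP] at h2
    rw [h2]
    simp [Nat.card_eq_fintype_card]

theorem aux_dim {k : Type*} [Field k] {r : ℕ} (h : MvPolynomial (Fin r) k) (hh : ¬ IsUnit h) :
    (r : WithBot ℕ∞) ≤ ringKrullDim (MvPolynomial (Fin r) k ⧸ Ideal.span {h}) + 1 := by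
  obtain ⟨M, hM, hle⟩ := Ideal.exists_le_maximal (Ideal.span {h})
    (by rwa [Ne, Ideal.span_singleton_eq_top])
  have h1 := Ideal.height_le_ringKrullDim_quotient_add_one (r := h) (p := M)
    (hle (Ideal.mem_span_singleton_self h))
  rw [aux_height M hM] at h1
  simpa using h1

theorem aux_taylor {k : Type*} [Field k] {σ : Type*} [Fintype σ] (p : σ → k)
    (f : MvPolynomial σ k) :
    f - C (eval p f) - ∑ i, C (eval p (pderiv i f)) * (X i - C (p i)) ∈
      (RingHom.ker (eval p)) ^ 2 := by
  classical
  induction f using MvPolynomial.induction_on with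
  | C a => simp
  | add f g hf hg =>
    convert Ideal.add_mem _ hf hg using 1
    simp only [map_add, add_mul, Finset.sum_add_distrib]
    ring
  | mul_X f j hf =>
    have h1 : f - C (eval p f) ∈ RingHom.ker (eval p) := by simp [RingHom.mem_ker]
    have h2 : (X j - C (p j) : MvPolynomial σ k) ∈ RingHom.ker (eval p) := by
      simp [RingHom.mem_ker]
    have h3 := Ideal.mul_mem_mul h1 h2
    rw [← pow_two] at h3
    have h4 := Ideal.mul_mem_left _ (C (p j)) hf
    convert Ideal.add_mem _ h3 h4 using 1
    have : ∑ i, C (eval p (pderiv i (f * X j))) * (X i - C (p i)) =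
        C (p j) * ∑ i, C (eval p (pderiv i f)) * (X i - C (p i))
          + C (eval p f) * (X j - C (p j)) := by
      rw [Finset.mul_sum]
      have h5 : ∀ i, C (eval p (pderiv i (f * X j))) * (X i - C (p i)) =
        C (p j) * (C (eval p (pderiv i f)) * (X i - C (p i))) +
          (if j = i then C (eval p f) * (X j - C (p j)) else 0) := by
        intro i
        rw [Derivation.leibniz, pderiv_X]
        by_cases hij : j = i
        · subst hij; simp; ring
        · simp [hij, Pi.single_apply, Ne.symm hij]; ring
      simp_rw [h5, Finset.sum_add_distrib]
      simp
    rw [this]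
    simp
    ring

theorem aux_crit {k : Type*} [Field k] {σ : Type*} [Fintype σ]
    (G : Set (MvPolynomial σ k))
    (H : ∀ p : σ → k, (∀ g ∈ G, eval p g = 0) → ∀ t : σ → k,
      (∀ g ∈ G, ∑ i, t i * eval p (pderiv i g) = 0) → t = 0) :
    {p : σ → k | ∀ g ∈ G, eval p g = 0}.Finite := by
  classical
  have hfin := Ideal.finite_minimalPrimes_of_isNoetherianRing _ (Ideal.span G)
  refine Set.Finite.of_finite_image (f := fun p => RingHom.ker (eval p)) (hfin.subset ?_) ?_
  · rintro _ ⟨p, hp, rfl⟩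
    simp only
    set m := RingHom.ker (eval p) with hm
    have hmprime : m.IsPrime := RingHom.ker_isPrime _
    have hIm : Ideal.span G ≤ m := Ideal.span_le.2 fun g hg => hp g hg
    -- gradients span everything
    let grad : MvPolynomial σ k →ₗ[k] (σ → k) :=
      LinearMap.pi fun i => (aeval p : MvPolynomial σ k →ₐ[k] k).toLinearMap ∘ₗ
        (pderiv i : Derivation k (MvPolynomial σ k) (MvPolynomial σ k)).toLinearMap
    have hgrad : ∀ f i, grad f i = eval p (pderiv i f) := by
      intro f i
      simp [grad, aeval_eq_eval]
    have hspan : Submodule.span k (grad '' G) = ⊤ := by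
      by_contra hne
      obtain ⟨φ, hφ0, hφ⟩ := Submodule.exists_le_ker_of_lt_top _ (lt_top_iff_ne_top.2 hne)
      have ht := H p hp (fun i => φ (Pi.single i 1)) (by
        intro g hg
        have h1 : φ (grad g) = 0 := hφ (Submodule.subset_span ⟨g, hg, rfl⟩)
        rw [← h1, LinearMap.pi_apply_eq_sum_univ φ (grad g)]
        refine Finset.sum_congr rfl fun i _ => ?_
        rw [hgrad, smul_eq_mul, mul_comm]
        congr 2
        ext j
        simp [Pi.single_apply, eq_comm])
      apply hφ0
      apply LinearMap.pi_ext'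
      intro i
      ext
      simpa using congrFun ht i
    have hX : ∀ i, (X i - C (p i) : MvPolynomial σ k) ∈ m ^ 2 ⊔ Ideal.span G := by
      intro i
      have h1 : (Pi.single i 1 : σ → k) ∈ Submodule.span k (grad '' G) := by rw [hspan]; trivial
      rw [Submodule.span_image] at h1
      obtain ⟨f, hf, hfe⟩ := h1
      have hfI : f ∈ Ideal.span G := by
        have : Submodule.span k G ≤ (Ideal.span G).restrictScalars k :=
          Submodule.span_le.2 fun g hg => Ideal.subset_span hg
        exact this hf
      have h2 := aux_taylor p f
      have h3 : eval p f = 0 := hIm hfI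
      have h4 : ∑ j, C (eval p (pderiv j f)) * (X j - C (p j)) =
          (X i - C (p i) : MvPolynomial σ k) := by
        simp_rw [← hgrad, hfe]
        rw [Finset.sum_eq_single i]
        · simp
        · intro j _ hj; simp [hj]
        · simp
      rw [h3, h4] at h2
      have h5 : (X i - C (p i) : MvPolynomial σ k) = -(f - C 0 - (X i - C (p i))) + f := by
        simp
      rw [h5]
      exact Ideal.add_mem _ (Ideal.neg_mem_iff _ |>.2 (Ideal.mem_sup_left h2))
        (Ideal.mem_sup_right hfI)
    have hmle : m ≤ m ^ 2 ⊔ Ideal.span G := by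
      intro f hf
      have h2 := aux_taylor p f
      have h3 : eval p f = 0 := hf
      rw [h3] at h2
      have h5 : f = (f - C 0 - ∑ j, C (eval p (pderiv j f)) * (X j - C (p j))) +
        ∑ j, C (eval p (pderiv j f)) * (X j - C (p j)) := by simp
      rw [h5]
      exact Ideal.add_mem _ (Ideal.mem_sup_left h2)
        (Ideal.sum_mem _ fun j _ => Ideal.mul_mem_left _ _ (hX j))
    obtain ⟨P, hP, hPm⟩ := Ideal.exists_minimalPrimes_le hIm
    have hPp : P.IsPrime := hP.1.1
    have hmP : m ≤ m ^ 2 ⊔ P := hmle.trans (sup_le_sup_left hP.1.2 _)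
    let n := m.map (Ideal.Quotient.mk P)
    have hn : n ≤ n • n := by
      have := Ideal.map_mono (f := Ideal.Quotient.mk P) hmP
      rw [Ideal.map_sup, Ideal.map_quotient_self, sup_bot_eq, Ideal.map_pow, pow_two] at this
      exact this
    have hnfg : n.FG := IsNoetherian.noetherian n
    obtain ⟨s, hs1, hs2⟩ :=
      Submodule.exists_sub_one_mem_and_smul_eq_zero_of_fg_of_le_smul n n hnfg hn
    have hntop : n ≠ ⊤ := by
      intro h
      have := Ideal.comap_map_of_surjective (Ideal.Quotient.mk P) Ideal.Quotient.mk_surjective m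
      change Ideal.comap _ n = _ at this
      rw [h, Ideal.comap_top, ← RingHom.ker_eq_comap_bot, Ideal.mk_ker, sup_eq_left.2 hPm] at this
      exact hmprime.ne_top this.symm
    have hs0 : s ≠ 0 := by
      rintro rfl
      apply hntop
      rw [Ideal.eq_top_iff_one]
      simpa using n.neg_mem hs1
    have hmeq : m ≤ P := by
      intro f hf
      have h1 := hs2 _ (Ideal.mem_map_of_mem (Ideal.Quotient.mk P) hf)
      rw [smul_eq_mul, mul_eq_zero] at h1
      exact Ideal.Quotient.eq_zero_iff_mem.1 (h1.resolve_left hs0)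
    rw [le_antisymm hmeq hPm]
    exact hP
  · intro p _ q _ hpq
    simp only at hpq
    ext i
    have h1 : (X i - C (q i) : MvPolynomial σ k) ∈ RingHom.ker (eval p) := by
      rw [hpq]; simp [RingHom.mem_ker]
    simpa [RingHom.mem_ker, sub_eq_zero] using h1

theorem aux_key {k : Type*} [Field k] {r D : ℕ} (hD : 2 ≤ D)
    (l m : Fin 3 → MvPolynomial (Fin r) k)
    (hl : ∀ j, (l j).IsHomogeneous 1) (hm : ∀ j, (m j).IsHomogeneous D)
    (h : ∀ i j, l i * m j = l j * m i) (hl0 : ∃ j, l j ≠ 0) :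
    ∃ g, ¬ IsUnit g ∧ ∀ j, g ∣ m j := by
  obtain ⟨i, hi⟩ := hl0
  have hdeg : (l i).totalDegree = 1 := (hl i).totalDegree hi
  have hirr : Irreducible (l i) := by
    refine irreducible_of_totalDegree_eq_one hdeg fun x hx => ?_
    rw [isUnit_iff_ne_zero]
    rintro rfl
    apply hi
    ext d
    simpa using hx d
  have hpr : Prime (l i) := hirr.prime
  have hunit : ∀ g : MvPolynomial (Fin r) k, IsUnit g → g.totalDegree = 0 := fun g hg =>
    (MvPolynomial.isUnit_iff_totalDegree_of_isReduced.mp hg).2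
  by_cases hd : l i ∣ m i
  · obtain ⟨g, hg⟩ := hd
    refine ⟨g, ?_, ?_⟩
    · intro hu
      have hg0 : g ≠ 0 := hu.ne_zero
      have h1 : (m i).totalDegree = D := (hm i).totalDegree (by rw [hg]; exact mul_ne_zero hi hg0)
      rw [hg, totalDegree_mul_of_isDomain hi hg0, hdeg, hunit g hu] at h1
      omega
    · intro j
      refine ⟨l j, mul_left_cancel₀ hi ?_⟩
      rw [h i j, hg]; ring
  · refine ⟨m i, ?_, ?_⟩
    · intro hu
      have h1 : (m i).totalDegree = D := (hm i).totalDegree hu.ne_zero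
      rw [hunit _ hu] at h1
      omega
    · intro j
      have h1 : l i ∣ l j * m i := ⟨m j, (h i j).symm⟩
      obtain ⟨c, hc⟩ := (hpr.dvd_or_dvd h1).resolve_right hd
      refine ⟨c, mul_left_cancel₀ hi ?_⟩
      rw [h i j, hc]; ring

theorem aux_chain {k : Type*} [Field k] {σ : Type*} [Fintype σ] {B : Type*} [CommRing B]
    [Algebra k B] (φ : MvPolynomial σ k →ₐ[k] B) (D : Derivation k B B) (F : MvPolynomial σ k) :
    D (φ F) = ∑ s, φ (pderiv s F) * D (φ (X s)) := by
  classical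
  induction F using MvPolynomial.induction_on with
  | C a =>
    have : φ (C a) = algebraMap k B a := φ.commutes a
    simp [this]
  | add f g hf hg => simp [hf, hg, add_mul, Finset.sum_add_distrib]
  | mul_X f j hf =>
    rw [map_mul, Derivation.leibniz, hf]
    simp only [Derivation.leibniz, pderiv_X, smul_eq_mul, map_add, map_mul, add_mul,
      Finset.sum_add_distrib]
    congr 1
    · rw [Finset.sum_eq_single j]
      · simp
      · intro i _ hij; simp [hij.symm]
      · simp
    · rw [Finset.mul_sum]
      exact Finset.sum_congr rfl fun i _ => by ring

/-- point of the graph -/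
def auxPt {r : ℕ} (e : Fin r ⊕ Fin 3 ≃ Fin (r + 3))
    {B : Type*} [CommRing B] (a : Fin 3 × Fin r → B) (x : Fin r → B) : Fin (r + 3) → B :=
  fun s => Sum.elim x (fun j => ∑ i, a (j, i) * x i) (e.symm s)

theorem aux_chart {k : Type*} [Field k] {r : ℕ} (W : Submodule k (Fin (r + 3) → k))
    (hW : Module.finrank k W = r) :
    ∃ (e : Fin r ⊕ Fin 3 ≃ Fin (r + 3)) (a : Fin 3 × Fin r → k),
      (W : Set (Fin (r + 3) → k)) = Set.range (auxPt e a) := by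
  classical
  let c : Fin (r + 3) → Module.Dual k W := fun s => (LinearMap.proj s) ∘ₗ W.subtype
  have hc : Submodule.span k (Set.range c) = ⊤ := by
    rw [eq_top_iff]
    intro f _
    obtain ⟨g, hg⟩ := LinearMap.exists_extend f
    have : f = ∑ s, g (Pi.single s 1) • c s := by
      ext w
      rw [← hg]
      simp only [LinearMap.comp_apply]
      rw [LinearMap.pi_apply_eq_sum_univ g]
      simp only [LinearMap.sum_apply, LinearMap.smul_apply, smul_eq_mul, c, LinearMap.comp_apply,
        LinearMap.proj_apply]
      refine Finset.sum_congr rfl fun i _ => ?_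
      rw [mul_comm]
      congr 2
      ext j
      simp [Pi.single_apply, eq_comm]
    rw [this]
    exact Submodule.sum_mem _ fun s _ => Submodule.smul_mem _ _ (Submodule.subset_span ⟨s, rfl⟩)
  obtain ⟨κ, b, hb, hsp, hli⟩ := exists_linearIndependent' k c
  rw [hc] at hsp
  have : Fintype κ := Fintype.ofInjective b hb
  have hcard : Fintype.card κ = r := by
    rw [← hW, ← Subspace.dual_finrank_eq (K := k) (V := W)]
    exact (Module.finrank_eq_card_basis (Module.Basis.mk hli hsp.ge)).symm
  let u : Fin r ≃ κ := (Fintype.equivFinOfCardEq hcard).symm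
  let v : Fin r → Fin (r + 3) := b ∘ u
  have hv : Function.Injective v := hb.comp u.injective
  have hcompl : Fintype.card ((Set.range v)ᶜ : Set (Fin (r + 3))) = 3 := by
    rw [Fintype.card_compl_set, Set.card_range_of_injective hv]
    simp
  let e : Fin r ⊕ Fin 3 ≃ Fin (r + 3) :=
    (Equiv.sumCongr (Equiv.ofInjective v hv) (Fintype.equivFinOfCardEq hcompl).symm).trans
      (Equiv.Set.sumCompl (Set.range v))
  have he : ∀ i, e (Sum.inl i) = v i := by intro i; simp [e]
  let φ : W →ₗ[k] (Fin r → k) := LinearMap.pi fun i => c (v i)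
  have hφ : Function.Injective φ := by
    rw [injective_iff_map_eq_zero]
    intro w hw
    have h1 : ∀ f ∈ Submodule.span k (Set.range (c ∘ b)), f w = 0 := by
      intro f hf
      induction hf using Submodule.span_induction with
      | mem f hf =>
        obtain ⟨q, rfl⟩ := hf
        have := congrFun hw (u.symm q)
        simpa [φ, v] using this
      | zero => simp
      | add f g _ _ hf hg => simp [hf, hg]
      | smul t f _ hf => simp [hf]
    rw [hsp] at h1
    ext s
    simpa [c] using h1 (c s) trivial
  let E : W ≃ₗ[k] (Fin r → k) := LinearEquiv.ofInjectiveOfFinrankEq φ hφ (by simp [hW])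
  have hE : ∀ w i, E w i = (w : Fin (r + 3) → k) (e (Sum.inl i)) := by
    intro w i
    rw [he]
    rfl
  refine ⟨e, fun q => (E.symm (Pi.single q.2 1) : Fin (r + 3) → k) (e (Sum.inr q.1)), ?_⟩
  have key : ∀ x, auxPt e
      (fun q => (E.symm (Pi.single q.2 1) : Fin (r + 3) → k) (e (Sum.inr q.1))) x =
        (E.symm x : Fin (r + 3) → k) := by
    intro x
    ext s
    obtain ⟨q, rfl⟩ := e.surjective s
    rcases q with i | j
    · simp only [auxPt, Equiv.symm_apply_apply, Sum.elim_inl]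
      rw [← hE, LinearEquiv.apply_symm_apply]
    · simp only [auxPt, Equiv.symm_apply_apply, Sum.elim_inr]
      have := LinearMap.pi_apply_eq_sum_univ
        ((LinearMap.proj (e (Sum.inr j))) ∘ₗ W.subtype ∘ₗ E.symm.toLinearMap) x
      simp only [LinearMap.comp_apply, LinearMap.proj_apply, LinearEquiv.coe_coe,
        Submodule.subtype_apply, smul_eq_mul] at this
      rw [this]
      refine Finset.sum_congr rfl fun i _ => ?_
      have h1 : (fun j => if i = j then 1 else 0 : Fin r → k) = Pi.single i 1 := by
        ext j
        simp [Pi.single_apply, eq_comm]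
      rw [mul_comm, h1]
  ext w
  simp only [SetLike.mem_coe, Set.mem_range, key]
  constructor
  · intro hw
    exact ⟨E ⟨w, hw⟩, by simp⟩
  · rintro ⟨x, rfl⟩
    exact (E.symm x).2

theorem aux_tangent {k : Type*} [Field k] [Infinite k] {r : ℕ}
    (e : Fin r ⊕ Fin 3 ≃ Fin (r + 3)) (F : MvPolynomial (Fin (r + 3)) k)
    (a t : Fin 3 × Fin r → k)
    (h : ∀ x : Fin r → k, ∑ q, t q * eval a (pderiv q
      (aeval (auxPt e (X : Fin 3 × Fin r → MvPolynomial (Fin 3 × Fin r) k)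
        (fun i => C (x i))) F)) = 0) :
    ∑ j, (∑ i, C (t (j, i)) * X i) *
      (aeval (auxPt e (fun q => C (a q)) (X : Fin r → MvPolynomial (Fin r) k))
        (pderiv (e (Sum.inr j)) F)) = 0 := by
  classical
  apply MvPolynomial.funext
  intro x
  have ev1 : ∀ P : MvPolynomial (Fin (r + 3)) k,
      eval x (aeval (auxPt e (fun q => C (a q)) (X : Fin r → MvPolynomial (Fin r) k)) P) =
        eval (auxPt e a x) P := by
    intro P
    induction P using MvPolynomial.induction_on with
    | C c => simp
    | add f g hf hg => simp only [map_add, hf, hg]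
    | mul_X f s hf =>
      simp only [map_mul, hf, aeval_X, eval_X]
      congr 1
      simp only [auxPt]
      rcases e.symm s with i | j <;> simp
  have ev2 : ∀ P : MvPolynomial (Fin (r + 3)) k,
      eval a (aeval (auxPt e (X : Fin 3 × Fin r → MvPolynomial (Fin 3 × Fin r) k)
        (fun i => C (x i))) P) = eval (auxPt e a x) P := by
    intro P
    induction P using MvPolynomial.induction_on with
    | C c => simp
    | add f g hf hg => simp only [map_add, hf, hg]
    | mul_X f s hf =>
      simp only [map_mul, hf, aeval_X, eval_X]
      congr 1
      simp only [auxPt]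
      rcases e.symm s with i | j <;> simp
  have h1 : ∀ q, eval a (pderiv q
      (aeval (auxPt e (X : Fin 3 × Fin r → MvPolynomial (Fin 3 × Fin r) k)
        (fun i => C (x i))) F)) = eval (auxPt e a x) (pderiv (e (Sum.inr q.1)) F) * x q.2 := by
    rintro ⟨j, i⟩
    rw [aux_chain, map_sum, ← e.sum_comp, Fintype.sum_sum_type]
    simp only [map_mul, ev2, aeval_X, auxPt, Equiv.symm_apply_apply, Sum.elim_inl, Sum.elim_inr]
    rw [Finset.sum_eq_zero (by simp), zero_add, Finset.sum_eq_single j]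
    · congr 1
      rw [map_sum, map_sum, Finset.sum_eq_single i]
      · simp [Derivation.leibniz]
      · intro i' _ hi'
        simp [Derivation.leibniz, pderiv_X, Pi.single_apply, hi']
      · simp
    · intro j' _ hj'
      rw [map_sum, map_sum, Finset.sum_eq_zero, mul_zero]
      intro i' _
      simp [Derivation.leibniz, pderiv_X, Pi.single_apply, hj']
    · simp
  have h2 := h x
  simp_rw [h1] at h2
  rw [Fintype.sum_prod_type] at h2
  rw [map_zero, ← h2, map_sum]
  refine Finset.sum_congr rfl fun j _ => ?_
  rw [map_mul, ev1, map_sum, Finset.sum_mul]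
  refine Finset.sum_congr rfl fun i _ => ?_
  simp
  ring

set_option maxHeartbeats 1600000 in
theorem aux_main {k : Type*} [Field k] [Infinite k] {r : ℕ} (hr : 2 ≤ r)
    (d₁ d₂ : ℕ) (hd₁ : 0 < d₁) (hd₂ : 0 < d₂) (hd : 4 ≤ d₁ + d₂)
    (F₁ F₂ : MvPolynomial (Fin (r + 3)) k)
    (hhom₁ : F₁.IsHomogeneous d₁) (hhom₂ : F₂.IsHomogeneous d₂)
    (hsing : ringKrullDim (MvPolynomial (Fin (r + 3)) k ⧸
        Ideal.span ({F₁, F₂} ∪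
          Set.range (fun ij : Fin (r + 3) × Fin (r + 3) =>
            pderiv ij.1 F₁ * pderiv ij.2 F₂ - pderiv ij.2 F₁ * pderiv ij.1 F₂)))
        + 2 ≤ (r : WithBot ℕ∞))
    (e : Fin r ⊕ Fin 3 ≃ Fin (r + 3)) :
    {a : Fin 3 × Fin r → k | ∀ x, eval (auxPt e a x) F₁ = 0 ∧ eval (auxPt e a x) F₂ = 0}.Finite := by
  classical
  let g : MvPolynomial (Fin (r + 3)) k → (Fin r → k) → MvPolynomial (Fin 3 × Fin r) k :=
    fun F x => aeval (auxPt e (X : Fin 3 × Fin r → MvPolynomial (Fin 3 × Fin r) k)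
        (fun i => C (x i))) F
  have hg : ∀ F x a, eval a (g F x) = eval (auxPt e a x) F := by
    intro P x a
    simp only [g]
    induction P using MvPolynomial.induction_on with
    | C c => simp
    | add f g hf hg => simp only [map_add, hf, hg]
    | mul_X f s hf =>
      simp only [map_mul, hf, aeval_X, eval_X]
      congr 1
      simp only [auxPt]
      rcases e.symm s with i | j <;> simp
  refine (aux_crit (Set.range (g F₁) ∪ Set.range (g F₂)) ?_).subset ?_
  swap
  · intro a ha f hf
    rcases hf with ⟨x, rfl⟩ | ⟨x, rfl⟩
    · rw [hg]; exact (ha x).1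
    · rw [hg]; exact (ha x).2
  intro a ha t ht
  let ψ : MvPolynomial (Fin (r + 3)) k →ₐ[k] MvPolynomial (Fin r) k :=
    aeval (auxPt e (fun q => C (a q)) (X : Fin r → MvPolynomial (Fin r) k))
  have hψX1 : ∀ i, ψ (X (e (Sum.inl i))) = X i := by intro i; simp [ψ, auxPt]
  have hψX2 : ∀ j, ψ (X (e (Sum.inr j))) = ∑ i, C (a (j, i)) * X i := by
    intro j; simp [ψ, auxPt]
  have hψX : ∀ s, (ψ (X s)).IsHomogeneous 1 := by
    intro s
    obtain ⟨q, rfl⟩ := e.surjective s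
    rcases q with i | j
    · rw [hψX1]; exact isHomogeneous_X _ _
    · rw [hψX2]
      exact IsHomogeneous.sum _ _ _ fun i _ => isHomogeneous_C_mul_X _ _
  have hψhom : ∀ (P : MvPolynomial (Fin (r + 3)) k) (n : ℕ), P.IsHomogeneous n →
      (ψ P).IsHomogeneous n := by
    intro P n hP
    have := hP.aeval (n := 1) (auxPt e (fun q => C (a q)) (X : Fin r → MvPolynomial (Fin r) k))
      (fun s => by simpa [ψ] using hψX s)
    rwa [one_mul] at this
  have hψsurj : Function.Surjective ψ := by
    intro P
    refine ⟨rename (fun i => e (Sum.inl i)) P, ?_⟩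
    have : (ψ.comp (rename (fun i => e (Sum.inl i)))) = AlgHom.id k _ := by
      ext1 i
      simp [hψX1]
    exact congrArg (fun f => f P) this
  have hψ0 : ∀ P, (∀ x, eval (auxPt e a x) P = 0) → ψ P = 0 := by
    intro P hP
    apply MvPolynomial.funext
    intro x
    rw [map_zero, ← hP x]
    clear hP
    simp only [ψ]
    induction P using MvPolynomial.induction_on with
    | C c => simp
    | add f g hf hg => simp only [map_add, hf, hg]
    | mul_X f s hf =>
      simp only [map_mul, hf, aeval_X, eval_X]
      congr 1
      simp only [auxPt]
      rcases e.symm s with i | j <;> simp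
  have z1 : ψ F₁ = 0 := hψ0 _ fun x => by rw [← hg]; exact ha _ (Or.inl ⟨x, rfl⟩)
  have z2 : ψ F₂ = 0 := hψ0 _ fun x => by rw [← hg]; exact ha _ (Or.inr ⟨x, rfl⟩)
  let l : Fin 3 → MvPolynomial (Fin r) k := fun j => ∑ i, C (t (j, i)) * X i
  let A : Fin 3 → MvPolynomial (Fin r) k := fun j => ψ (pderiv (e (Sum.inr j)) F₁)
  let B : Fin 3 → MvPolynomial (Fin r) k := fun j => ψ (pderiv (e (Sum.inr j)) F₂)
  have t1 : ∑ j, l j * A j = 0 := aux_tangent e F₁ a t fun x => ht _ (Or.inl ⟨x, rfl⟩)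
  have t2 : ∑ j, l j * B j = 0 := aux_tangent e F₂ a t fun x => ht _ (Or.inr ⟨x, rfl⟩)
  have hA : ∀ j, (A j).IsHomogeneous (d₁ - 1) := fun j => hψhom _ _ hhom₁.pderiv
  have hB : ∀ j, (B j).IsHomogeneous (d₂ - 1) := fun j => hψhom _ _ hhom₂.pderiv
  let mm : Fin 3 → Fin 3 → MvPolynomial (Fin r) k := fun i j => A i * B j - A j * B i
  let m : Fin 3 → MvPolynomial (Fin r) k := ![mm 1 2, mm 2 0, mm 0 1]
  have hmm : ∀ i j, (mm i j).IsHomogeneous ((d₁ - 1) + (d₂ - 1)) := fun i j =>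
    ((hA i).mul (hB j)).sub ((hA j).mul (hB i))
  by_contra hne
  have hl0 : ∃ j, l j ≠ 0 := by
    by_contra hcon
    push Not at hcon
    apply hne
    ext ⟨j, i⟩
    have := congrArg (eval (Pi.single i 1)) (hcon j)
    simpa [l, Pi.single_apply] using this
  obtain ⟨h, hnu, hdvd⟩ := aux_key (D := (d₁ - 1) + (d₂ - 1)) (by omega) l m
    (fun j => IsHomogeneous.sum _ _ _ fun i _ => isHomogeneous_C_mul_X _ _)
    (by
      intro j
      fin_cases j
      · exact hmm 1 2
      · exact hmm 2 0
      · exact hmm 0 1)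
    (by
      rw [Fin.sum_univ_three] at t1 t2
      intro i j
      fin_cases i <;> fin_cases j <;> simp [m, mm]
      · linear_combination A 2 * t2 - B 2 * t1
      · linear_combination B 1 * t1 - A 1 * t2
      · linear_combination B 2 * t1 - A 2 * t2
      · linear_combination A 0 * t2 - B 0 * t1
      · linear_combination A 1 * t2 - B 1 * t1
      · linear_combination B 0 * t1 - A 0 * t2)
    hl0
  have hmmd : ∀ i j, h ∣ mm i j := by
    have d0 := hdvd 0
    have d1 := hdvd 1
    have d2 := hdvd 2
    simp only [m, Matrix.cons_val] at d0 d1 d2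
    have hsym : ∀ i j, mm i j = - mm j i := fun i j => by simp only [mm]; ring
    have hself : ∀ i, mm i i = 0 := fun i => by simp only [mm]; ring
    intro i j
    fin_cases i <;> fin_cases j
    · simp [hself]
    · exact d2
    · change h ∣ mm 0 2
      rw [hsym, dvd_neg]; exact d1
    · change h ∣ mm 1 0
      rw [hsym, dvd_neg]; exact d2
    · simp [hself]
    · exact d0
    · exact d1
    · change h ∣ mm 2 1
      rw [hsym, dvd_neg]; exact d0
    · simp [hself]
  -- every derivative restricted to the plane is a combination of normal ones
  have hcomb : ∃ b : Fin (r + 3) → Fin 3 → MvPolynomial (Fin r) k,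
      (∀ s, ψ (pderiv s F₁) = ∑ j, b s j * A j) ∧ (∀ s, ψ (pderiv s F₂) = ∑ j, b s j * B j) := by
    have hrel : ∀ F, ψ F = 0 → ∀ i, ψ (pderiv (e (Sum.inl i)) F) =
        ∑ j, (- C (a (j, i))) * ψ (pderiv (e (Sum.inr j)) F) := by
      intro F hF i
      have h1 := aux_chain ψ (pderiv i) F
      rw [hF, map_zero, ← e.sum_comp, Fintype.sum_sum_type, Finset.sum_eq_single i] at h1
      · simp only [hψX1, hψX2, pderiv_X_self, mul_one, map_sum] at h1
        have h2 : ∀ j, ∑ i', pderiv i (C (a (j, i')) * X i' : MvPolynomial (Fin r) k) =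
            C (a (j, i)) := by
          intro j
          rw [Finset.sum_eq_single i]
          · simp
          · intro i' _ hi'; simp [pderiv_X, Pi.single_apply, hi']
          · simp
        simp only [h2] at h1
        simp only [neg_mul, Finset.sum_neg_distrib]
        have h3 : ∑ j, C (a (j, i)) * ψ (pderiv (e (Sum.inr j)) F) =
            ∑ j, ψ (pderiv (e (Sum.inr j)) F) * C (a (j, i)) :=
          Finset.sum_congr rfl fun j _ => mul_comm _ _
        rw [h3]
        exact eq_neg_of_add_eq_zero_left h1.symm
      · intro i' _ hi'; simp [hψX1, pderiv_X, Pi.single_apply, hi']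
      · simp
    refine ⟨fun s => Sum.elim (fun i j => - C (a (j, i))) (fun j' j => if j' = j then 1 else 0)
      (e.symm s), ?_, ?_⟩
    · intro s
      obtain ⟨q, rfl⟩ := e.surjective s
      rcases q with i | j
      · simpa using hrel F₁ z1 i
      · simp [A]
    · intro s
      obtain ⟨q, rfl⟩ := e.surjective s
      rcases q with i | j
      · simpa using hrel F₂ z2 i
      · simp [B]
  obtain ⟨b, hb1, hb2⟩ := hcomb
  set J := Ideal.span ({F₁, F₂} ∪
          Set.range (fun ij : Fin (r + 3) × Fin (r + 3) =>
            pderiv ij.1 F₁ * pderiv ij.2 F₂ - pderiv ij.2 F₁ * pderiv ij.1 F₂)) with hJ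
  let π := (Ideal.Quotient.mk (Ideal.span {h})).comp ψ.toRingHom
  have hker : ∀ f ∈ J, π f = 0 := by
    have : J ≤ RingHom.ker π := by
      rw [hJ, Ideal.span_le]
      rintro f ((rfl | rfl) | ⟨⟨s, s'⟩, rfl⟩)
      · change π _ = 0
        simp [π, z1]
      · change π _ = 0
        simp [π, z2]
      · change Ideal.Quotient.mk (Ideal.span {h}) (ψ _) = 0
        rw [Ideal.Quotient.eq_zero_iff_mem, Ideal.mem_span_singleton]
        simp only [map_sub, map_mul, hb1, hb2]
        have : (∑ j, b s j * A j) * (∑ j, b s' j * B j) - (∑ j, b s' j * A j) * (∑ j, b s j * B j)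
            = ∑ i, ∑ j, (b s i * b s' j) * mm i j := by
          simp only [Fin.sum_univ_three, mm]
          ring
        rw [this]
        exact Finset.dvd_sum fun i _ => Finset.dvd_sum fun j _ => (hmmd i j).mul_left _
    exact this
  have hsur : Function.Surjective (Ideal.Quotient.lift J π hker) :=
    Ideal.Quotient.lift_surjective_of_surjective J hker
      (Ideal.Quotient.mk_surjective.comp hψsurj)
  have dim1 := ringKrullDim_le_of_surjective _ hsur
  have dim2 := aux_dim h hnu
  have : (r : WithBot ℕ∞) + 1 ≤ r := by
    calc (r : WithBot ℕ∞) + 1 ≤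
        (ringKrullDim (MvPolynomial (Fin r) k ⧸ Ideal.span {h}) + 1) + 1 := by gcongr
      _ = ringKrullDim (MvPolynomial (Fin r) k ⧸ Ideal.span {h}) + 2 := by
        rw [add_assoc, one_add_one_eq_two]
      _ ≤ _ := by gcongr
      _ ≤ r := hsing
  have : r + 1 ≤ r := by exact_mod_cast this
  omega



/-- Proposition 9.3 of Salberger: an integral `r`-dimensional intersection
`Z ⊂ P^{r+2}` of two hypersurfaces of degrees `d₁`, `d₂` with `d₁d₂ ≥ 4` over an
algebraically closed field of characteristic `0`, whose singular locus has codimension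
at least three in `Z`, contains only finitely many `(r-1)`-planes.  Integrality and the
dimension of `Z` are expressed via the ideal `(F₁,F₂)` being prime with quotient of
Krull dimension `r+1`, the singular-locus condition via the Jacobian ideal `J` having
quotient of Krull dimension at most `r-2`, and `(r-1)`-planes correspond to
`r`-dimensional linear subspaces of `k^{r+3}` contained in the affine cone of `Z`. -/
theorem stmt_6 (k : Type*) [Field k] [IsAlgClosed k] [CharZero k] (r : ℕ) (hr : 2 ≤ r)
    (d₁ d₂ : ℕ) (hd₁ : 0 < d₁) (hd₂ : 0 < d₂) (hd : 4 ≤ d₁ * d₂)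
    (F₁ F₂ : MvPolynomial (Fin (r + 3)) k)
    (hhom₁ : F₁.IsHomogeneous d₁) (hhom₂ : F₂.IsHomogeneous d₂)
    (hprime : (Ideal.span {F₁, F₂}).IsPrime)
    (hdim : ringKrullDim (MvPolynomial (Fin (r + 3)) k ⧸ Ideal.span {F₁, F₂})
      = ((r + 1 : ℕ) : WithBot ℕ∞))
    (hsing : ringKrullDim (MvPolynomial (Fin (r + 3)) k ⧸
        Ideal.span ({F₁, F₂} ∪
          Set.range (fun ij : Fin (r + 3) × Fin (r + 3) =>
            pderiv ij.1 F₁ * pderiv ij.2 F₂ - pderiv ij.2 F₁ * pderiv ij.1 F₂)))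
        + 2 ≤ (r : WithBot ℕ∞)) :
    {W : Submodule k (Fin (r + 3) → k) |
      Module.finrank k W = r ∧ ∀ x ∈ W, eval x F₁ = 0 ∧ eval x F₂ = 0}.Finite := by
  classical
  have hd' : 4 ≤ d₁ + d₂ := by nlinarith [sq_nonneg ((d₁ : ℤ) - d₂)]
  have hfin : (⋃ e : Fin r ⊕ Fin 3 ≃ Fin (r + 3),
      (fun a => Set.range (auxPt e a)) '' {a : Fin 3 × Fin r → k |
        ∀ x, eval (auxPt e a x) F₁ = 0 ∧ eval (auxPt e a x) F₂ = 0}).Finite :=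
    Set.finite_iUnion fun e =>
      (aux_main hr d₁ d₂ hd₁ hd₂ hd' F₁ F₂ hhom₁ hhom₂ hsing e).image _
  refine Set.Finite.of_finite_image
    (f := fun W : Submodule k (Fin (r + 3) → k) => (W : Set (Fin (r + 3) → k)))
    (hfin.subset ?_) (SetLike.coe_injective.injOn)
  rintro _ ⟨W, ⟨hW, hWF⟩, rfl⟩
  obtain ⟨e, a, hea⟩ := aux_chart W hW
  refine Set.mem_iUnion.2 ⟨e, a, ?_, hea.symm⟩
  intro x
  apply hWF
  rw [← SetLike.mem_coe, hea]
  exact ⟨x, rfl⟩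
end

section
/- Let p be a prime and let R be a commutative Noetherian local ring containing the ring ℤ_p of p-adic integers as a subring. Let A = R/pR, let m be the maximal ideal of A, and assume m^k ≠ m^{k+1} for every integer k ≥ 0 (in particular A ≠ 0). Let (n_i(A))_{i=1}^∞ be the non-decreasing sequence of non-negative integers in which each integer k ≥ 0 occurs exactly dim_{A/m}(m^k/m^{k+1}) times. Let r_1,…,r_s be elements of R and let φ_1,…,φ_s be ring homomorphisms from R to ℤ_p. Then the determinant of the s×s matrix (φ_i(r_j))_{1≤i,j≤s} is divisible in ℤ_p by p^{Λ(s)}, where Λ(s) = n_1(A) + n_2(A) + ⋯ + n_s(A). -/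
/-- The maximal ideal of `A = R/pR` (for `R` local with `A ≠ 0`), realised as the image
of the maximal ideal of `R`. -/
noncomputable def maxIdealModP (p : ℕ) (R : Type*) [CommRing R] [IsLocalRing R] :
    Ideal (R ⧸ Ideal.span {(p : R)}) :=
  (IsLocalRing.maximalIdeal R).map (Ideal.Quotient.mk (Ideal.span {(p : R)}))

/-- `dim_{A/m}(m^k/m^{k+1})` for `A = R/pR` and `m` its maximal ideal, realised as the
dimension over `A/m` of `(m^k)/(m·m^k)`. -/
noncomputable def gDimModP (p : ℕ) (R : Type*) [CommRing R] [IsLocalRing R] (k : ℕ) : ℕ :=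
  Module.finrank ((R ⧸ Ideal.span {(p : R)}) ⧸ maxIdealModP p R)
    ((↥(maxIdealModP p R ^ k)) ⧸
      (maxIdealModP p R • ⊤ :
        Submodule (R ⧸ Ideal.span {(p : R)}) ↥(maxIdealModP p R ^ k)))

theorem dvd_of_closure {s : ℕ} {R S : Type*} [AddCommGroup R] [CommRing S]
    (f : MultilinearMap ℤ (fun _ : Fin s => R) S) (T : Set R) (hT : AddSubgroup.closure T = ⊤)
    (D : S) (h : ∀ v : Fin s → R, (∀ j, v j ∈ T) → D ∣ f v) (v : Fin s → R) : D ∣ f v := by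
  have key : ∀ (J : Finset (Fin s)) (v : Fin s → R), (∀ j, j ∉ J → v j ∈ T) → D ∣ f v := by
    intro J
    induction J using Finset.induction_on with
    | empty => intro v hv; exact h v (fun j => hv j (by simp))
    | insert i J hi ih =>
      intro v hv
      have : ∀ x ∈ AddSubgroup.closure T, D ∣ f (Function.update v i x) := by
        intro x hx
        induction hx using AddSubgroup.closure_induction with
        | mem x hx =>
          apply ih
          intro j hj
          by_cases hji : j = i
          · subst hji; simpa using hx
          · rw [Function.update_of_ne hji]
            exact hv j (by simp [hji, hj])
        | zero => simp
        | add x y _ _ hx hy => rw [f.map_update_add]; exact dvd_add hx hy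
        | neg x _ hx => rw [f.map_update_neg]; exact (dvd_neg).2 hx
      simpa using this (v i) (by simp [hT])
  exact key Finset.univ v (by simp)

theorem sum_le_aux (ν : ℕ → ℕ) (hmono : Monotone ν) (s : ℕ) (F : Finset ℕ) (c : ℕ)
    (hc : F.card + c = s) :
    ∑ i ∈ Finset.range s, ν i ≤ ∑ i ∈ F, ν i + c * ν s := by
  have h1 := Finset.sum_inter_add_sum_sdiff (Finset.range s) F ν
  have h2 := Finset.sum_inter_add_sum_sdiff F (Finset.range s) ν
  have h3 := Finset.card_inter_add_card_sdiff (Finset.range s) F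
  have h4 := Finset.card_inter_add_card_sdiff F (Finset.range s)
  rw [Finset.inter_comm] at h2 h4
  have h5 : ∑ i ∈ Finset.range s \ F, ν i ≤ (Finset.range s \ F).card • ν s :=
    Finset.sum_le_card_nsmul _ _ _ (fun i hi => hmono (by simp at hi; omega))
  have h6 : (F \ Finset.range s).card • ν s ≤ ∑ i ∈ F \ Finset.range s, ν i :=
    Finset.card_nsmul_le_sum _ _ _ (fun i hi => hmono (by simp at hi; omega))
  have h7 : (Finset.range s \ F).card = (F \ Finset.range s).card + c := by
    rw [Finset.card_range] at h3; omega
  rw [h7] at h5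
  simp only [smul_eq_mul, add_mul] at h5 h6
  omega

theorem det_aux (p : ℕ) [Fact p.Prime] (R : Type*) [CommRing R] (M : Ideal R)
    (ν : ℕ → ℕ) (hmono : Monotone ν) (e : ℕ → R) (he : ∀ i, e i ∈ M ^ (ν i))
    (s : ℕ) (φ : Fin s → (R →+* ℤ_[p]))
    (hφ : ∀ i k, ∀ x ∈ M ^ k, (p : ℤ_[p]) ^ k ∣ φ i x)
    (hT : AddSubgroup.closure (Set.range e ∪ (M ^ (ν s) : Ideal R)) = ⊤) (a : Fin s → R) :
    (p : ℤ_[p]) ^ (∑ i ∈ Finset.range s, ν i) ∣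
      (Matrix.of fun i j : Fin s => φ i (a j)).det := by
  let L : R →ₗ[ℤ] (Fin s → ℤ_[p]) := (AddMonoidHom.pi fun i => (φ i).toAddMonoidHom).toIntLinearMap
  let f : MultilinearMap ℤ (fun _ : Fin s => R) ℤ_[p] :=
    ((Matrix.detRowAlternating (n := Fin s) (R := ℤ_[p])).toMultilinearMap.restrictScalars ℤ).compLinearMap (fun _ => L)
  have hf : ∀ v, f v = (Matrix.of fun i j : Fin s => φ i (v j)).det := by
    intro v
    rw [← Matrix.det_transpose]
    rfl
  rw [← hf]
  refine dvd_of_closure f _ hT _ (fun v hv => ?_) a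
  rw [hf]
  classical
  let P : Finset (Fin s) := Finset.univ.filter (fun j => v j ∈ Set.range e)
  have hP : ∀ j, ∃ i, j ∈ P → e i = v j := by
    intro j
    by_cases h : j ∈ P
    · obtain ⟨i, hi⟩ := (Finset.mem_filter.1 h).2
      exact ⟨i, fun _ => hi⟩
    · exact ⟨0, fun h' => absurd h' h⟩
  choose g hg using hP
  by_cases hinj : Set.InjOn g P
  swap
  · simp only [Set.InjOn, not_forall] at hinj
    obtain ⟨j, hj, j', hj', h1, h2⟩ := hinj
    rw [Matrix.det_zero_of_column_eq h2]
    · exact dvd_zero _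
    · intro k
      simp only [Matrix.of_apply]
      rw [← hg j hj, ← hg j' hj', h1]
  let w : Fin s → ℕ := fun j => if j ∈ P then ν (g j) else ν s
  have hw : ∀ i j, (p : ℤ_[p]) ^ w j ∣ φ i (v j) := by
    intro i j
    by_cases h : j ∈ P
    · simp only [w, h, if_true]
      exact hφ _ _ _ (by rw [← hg j h]; exact he _)
    · simp only [w, h, if_false]
      refine hφ _ _ _ ?_
      rcases hv j with h' | h'
      · exact (h (Finset.mem_filter.2 ⟨Finset.mem_univ j, h'⟩)).elim
      · exact h'
  choose B hB using hw
  have : (Matrix.of fun i j : Fin s => φ i (v j)) = Matrix.of fun i j => (p : ℤ_[p]) ^ w j * (Matrix.of B) i j := by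
    ext i j; simp [hB i j]
  rw [this, Matrix.det_mul_row]
  refine Dvd.dvd.mul_right ?_ _
  rw [Finset.prod_pow_eq_pow_sum]
  refine pow_dvd_pow _ ?_
  have h1 := sum_le_aux ν hmono s (P.image g) (Pᶜ.card) (by
    rw [Finset.card_image_of_injOn hinj, Finset.card_add_card_compl]; simp)
  rw [Finset.sum_image hinj] at h1
  refine h1.trans (le_of_eq ?_)
  rw [← Finset.sum_add_sum_compl P]
  congr 1
  · exact Finset.sum_congr rfl (fun j hj => by simp [w, hj])
  · rw [← smul_eq_mul, ← Finset.sum_const]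
    exact Finset.sum_congr rfl (fun j hj => by simp [w, Finset.mem_compl.1 hj])

theorem span_aux (p : ℕ) (R : Type*) [CommRing R] [IsNoetherianRing R]
    [IsLocalRing R] (hp : (p : R) ∈ IsLocalRing.maximalIdeal R)
    (hne : ∀ k : ℕ, maxIdealModP p R ^ k ≠ maxIdealModP p R ^ (k + 1))
    (hZ : ∀ x : R, ∃ n : ℤ, x - n ∈ IsLocalRing.maximalIdeal R)
    (k : ℕ) (I : Set ℕ) (hcard : I.ncard = gDimModP p R k) :
    ∃ e : I → R, (∀ i, e i ∈ IsLocalRing.maximalIdeal R ^ k) ∧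
      ∀ x ∈ IsLocalRing.maximalIdeal R ^ k, ∃ y ∈ AddSubgroup.closure (Set.range e),
        ∃ z ∈ IsLocalRing.maximalIdeal R ^ (k + 1), ∃ r : R, x = y + z + p * r := by
  set M := IsLocalRing.maximalIdeal R with hM
  set q := Ideal.Quotient.mk (Ideal.span {(p : R)}) with hq
  have hqs : Function.Surjective q := Ideal.Quotient.mk_surjective
  have hker : RingHom.ker q ≤ M := by
    rw [hq, Ideal.mk_ker, Ideal.span_le]; simpa using hp
  have hmax : (maxIdealModP p R).IsMaximal := by
    unfold maxIdealModP
    refine (Ideal.map_eq_top_or_isMaximal_of_surjective q hqs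
      (IsLocalRing.maximalIdeal.isMaximal R)).resolve_left (fun h => ?_)
    have h1 := congrArg (Ideal.comap q) h
    rw [Ideal.comap_map_of_surjective q hqs, Ideal.comap_top, ← RingHom.ker_eq_comap_bot,
      sup_eq_left.2 hker] at h1
    exact (IsLocalRing.maximalIdeal.isMaximal R).ne_top h1
  letI : Field ((R ⧸ Ideal.span {(p : R)}) ⧸ maxIdealModP p R) := Ideal.Quotient.field _
  let m := maxIdealModP p R
  let N : Submodule (R ⧸ Ideal.span {(p : R)}) ↥(m ^ k) := m • ⊤
  have hN : ∀ x : ↥(m ^ k), x ∈ N ↔ (x : R ⧸ Ideal.span {(p : R)}) ∈ m ^ (k + 1) := by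
    intro x
    have h1 : N.map (m ^ k).subtype = m ^ (k + 1) := by
      simp only [N]
      rw [Submodule.map_smul'', Submodule.map_top, Submodule.range_subtype, smul_eq_mul, pow_succ']
    rw [← h1]
    constructor
    · intro h; exact ⟨x, h, rfl⟩
    · rintro ⟨y, hy, hyx⟩
      have : y = x := Subtype.ext hyx
      rwa [← this]
  have hmap : ∀ j, m ^ j = (M ^ j).map q := fun j => by
    rw [Ideal.map_pow]; rfl
  have hfin : Module.Finite ((R ⧸ Ideal.span {(p : R)}) ⧸ m) (↥(m ^ k) ⧸ N) :=
    Module.Finite.of_restrictScalars_finite (R ⧸ Ideal.span {(p : R)}) _ _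
  have hnt : Nontrivial (↥(m ^ k) ⧸ N) := by
    rw [Submodule.Quotient.nontrivial_iff]
    intro h
    apply hne k
    apply le_antisymm _ (Ideal.pow_le_pow_right (Nat.le_succ k))
    intro x hx
    exact (hN ⟨x, hx⟩).1 (h ▸ Submodule.mem_top)
  have hpos : 0 < gDimModP p R k := Module.finrank_pos (R := (R ⧸ Ideal.span {(p : R)}) ⧸ m) (M := ↥(m ^ k) ⧸ N)
  have hIfin : I.Finite := Set.finite_of_ncard_pos (by omega)
  haveI : Fintype I := hIfin.fintype
  let b0 : Module.Basis (Fin (gDimModP p R k)) ((R ⧸ Ideal.span {(p : R)}) ⧸ m) (↥(m ^ k) ⧸ N) :=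
    Module.finBasisOfFinrankEq _ _ rfl
  have hcI : Fintype.card I = gDimModP p R k := by
    rw [← hcard, ← Nat.card_coe_set_eq, Nat.card_eq_fintype_card]
  let b := b0.reindex (Fintype.equivFinOfCardEq hcI).symm
  have hlift : ∀ i : I, ∃ x : R, x ∈ M ^ k ∧ ∃ h : q x ∈ m ^ k, N.mkQ ⟨q x, h⟩ = b i := by
    intro i
    obtain ⟨⟨y, hy⟩, hyb⟩ := N.mkQ_surjective (b i)
    have hy' := hy
    rw [hmap, Ideal.mem_map_iff_of_surjective q hqs] at hy'
    obtain ⟨x, hx, rfl⟩ := hy'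
    exact ⟨x, hx, hy, hyb⟩
  choose e he he' heb using hlift
  refine ⟨e, he, fun x hx => ?_⟩
  have hqx : q x ∈ m ^ k := by rw [hmap]; exact Ideal.mem_map_of_mem q hx
  have hcoef : ∀ c : (R ⧸ Ideal.span {(p : R)}) ⧸ m, ∃ n : ℤ, c = n := by
    intro c
    obtain ⟨c, rfl⟩ := Ideal.Quotient.mk_surjective c
    obtain ⟨c, rfl⟩ := hqs c
    obtain ⟨n, hn⟩ := hZ c
    refine ⟨n, ?_⟩
    have : Ideal.Quotient.mk m (q (c - n)) = 0 :=
      Ideal.Quotient.eq_zero_iff_mem.2 (Ideal.mem_map_of_mem q hn)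
    rw [map_sub, map_sub, sub_eq_zero] at this
    simpa using this
  choose n hn using fun i => hcoef (b.repr (N.mkQ ⟨q x, hqx⟩) i)
  let y := ∑ i, n i • e i
  have hyM : y ∈ M ^ k := Ideal.sum_mem _ (fun i _ => zsmul_mem (he i) _)
  have hsum := b.sum_repr (N.mkQ ⟨q x, hqx⟩)
  have hxy : q (x - y) ∈ m ^ k := by rw [hmap]; exact Ideal.mem_map_of_mem q (sub_mem hx hyM)
  have h0 : N.mkQ ⟨q (x - y), hxy⟩ = 0 := by
    have h1 : (⟨q (x - y), hxy⟩ : ↥(m ^ k)) = ⟨q x, hqx⟩ - ∑ i, n i • ⟨q (e i), he' i⟩ := by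
      apply Subtype.ext
      simp [y]
    rw [h1, map_sub, map_sum, sub_eq_zero]
    rw [← hsum]
    refine Finset.sum_congr rfl (fun i _ => ?_)
    rw [hn i, map_zsmul, heb, Int.cast_smul_eq_zsmul]
  have h2 : q (x - y) ∈ m ^ (k + 1) := by
    rw [Submodule.mkQ_apply, Submodule.Quotient.mk_eq_zero, hN] at h0
    exact h0
  rw [hmap, Ideal.mem_map_iff_of_surjective q hqs] at h2
  obtain ⟨z, hz, hzq⟩ := h2
  have h3 : x - y - z ∈ Ideal.span {(p : R)} := Ideal.Quotient.eq.1 hzq.symm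
  obtain ⟨r, hr⟩ := Ideal.mem_span_singleton'.1 h3
  refine ⟨y, sum_mem (fun i _ => zsmul_mem (AddSubgroup.subset_closure (Set.mem_range_self i)) _), z, hz, r, ?_⟩
  rw [mul_comm, hr]; ring

theorem stmt_7 (p : ℕ) [Fact p.Prime] (R : Type*) [CommRing R] [IsNoetherianRing R]
    [IsLocalRing R] [Algebra ℤ_[p] R]
    (hsub : Function.Injective (algebraMap ℤ_[p] R))
    (hne : ∀ k : ℕ, maxIdealModP p R ^ k ≠ maxIdealModP p R ^ (k + 1))
    (ν : ℕ → ℕ) (hmono : Monotone ν)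
    (hcard : ∀ k : ℕ, {i : ℕ | ν i = k}.ncard = gDimModP p R k)
    (s : ℕ) (a : Fin s → R) (φ : Fin s → (R →+* ℤ_[p])) :
    (p : ℤ_[p]) ^ (∑ i ∈ Finset.range s, ν i) ∣
      (Matrix.of fun i j : Fin s => φ i (a j)).det := by
  obtain rfl | hs := Nat.eq_zero_or_pos s
  · simp
  set M := IsLocalRing.maximalIdeal R with hM
  have hφM : ∀ i x, φ i x ∈ IsLocalRing.maximalIdeal ℤ_[p] → x ∈ M := by
    intro i x hx
    rw [IsLocalRing.mem_maximalIdeal, mem_nonunits_iff] at hx ⊢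
    exact fun h => hx (h.map (φ i))
  have hpZ : (p : ℤ_[p]) ∈ IsLocalRing.maximalIdeal ℤ_[p] := by
    rw [PadicInt.maximalIdeal_eq_span_p]; exact Ideal.mem_span_singleton_self _
  have hp : (p : R) ∈ M := hφM ⟨0, hs⟩ _ (by simpa using hpZ)
  have hZ : ∀ i (x : R), ∃ n : ℤ, x - n ∈ M ∧ φ i x - n ∈ IsLocalRing.maximalIdeal ℤ_[p] := by
    intro i x
    obtain ⟨n, -, hn⟩ := PadicInt.exists_mem_range (φ i x)
    exact ⟨n, hφM i _ (by simpa using hn), by simpa using hn⟩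
  have hφ1 : ∀ i, M.map (φ i) ≤ Ideal.span {(p : ℤ_[p])} := by
    intro i
    rw [Ideal.map_le_iff_le_comap, ← PadicInt.maximalIdeal_eq_span_p]
    intro x hx
    obtain ⟨n, hn, hn'⟩ := hZ i x
    -- the integer `n` lies in `M`, hence is divisible by `p`
    have hnM : (n : R) ∈ M := by
      have := sub_mem hx hn
      simpa using this
    have hpn : (p : ℤ) ∣ n := by
      by_contra hnd
      have hco : IsCoprime (p : ℤ) n :=
        (Nat.prime_iff_prime_int.1 (Fact.out : p.Prime)).irreducible.coprime_iff_not_dvd.2 hnd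
      obtain ⟨u, v, huv⟩ := hco
      have h1 : (1 : R) ∈ M := by
        have : (u : R) * p + v * n = 1 := by exact_mod_cast congrArg (Int.cast : ℤ → R) huv
        rw [← this]
        exact add_mem (Ideal.mul_mem_left _ _ hp) (Ideal.mul_mem_left _ _ hnM)
      exact (Ideal.ne_top_iff_one M).1 (IsLocalRing.maximalIdeal.isMaximal R).ne_top h1
    obtain ⟨c, rfl⟩ := hpn
    rw [Ideal.mem_comap, ← sub_add_cancel (φ i x) ((p * c : ℤ) : ℤ_[p])]
    refine add_mem hn' ?_
    push_cast
    exact Ideal.mul_mem_right _ _ hpZ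
  have hφ : ∀ i k, ∀ x ∈ M ^ k, (p : ℤ_[p]) ^ k ∣ φ i x := by
    intro i k x hx
    rw [← Ideal.mem_span_singleton, ← Ideal.span_singleton_pow]
    refine Ideal.pow_right_mono (hφ1 i) k ?_
    rw [← Ideal.map_pow]
    exact Ideal.mem_map_of_mem _ hx
  choose e he hspan using fun k => span_aux p R hp hne
    (fun x => (hZ ⟨0, hs⟩ x).imp fun _ h => h.1) k {i | ν i = k} (hcard k)
  let E : ℕ → R := fun i => e (ν i) ⟨i, rfl⟩
  have hrange : ∀ k, Set.range (e k) ⊆ Set.range E := by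
    rintro k _ ⟨⟨i, rfl⟩, rfl⟩
    exact ⟨i, rfl⟩
  have step1 : ∀ K, ∀ x : R, ∃ y ∈ AddSubgroup.closure (Set.range E), ∃ z ∈ M ^ K,
      ∃ r : R, x = y + z + p * r := by
    intro K
    induction K with
    | zero => intro x; exact ⟨0, zero_mem _, x, by simp, 0, by simp⟩
    | succ K ih =>
      intro x
      obtain ⟨y, hy, z, hz, r, rfl⟩ := ih x
      obtain ⟨y', hy', z', hz', r', rfl⟩ := hspan K z hz
      exact ⟨y + y', add_mem hy (AddSubgroup.closure_mono (hrange K) hy'), z', hz', r + r', by ring⟩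
  have step2 : ∀ K n, ∀ x : R, ∃ y ∈ AddSubgroup.closure (Set.range E), ∃ z ∈ M ^ K,
      ∃ r : R, x = y + z + p ^ n * r := by
    intro K n
    induction n with
    | zero => intro x; exact ⟨0, zero_mem _, 0, zero_mem _, x, by simp⟩
    | succ n ih =>
      intro x
      obtain ⟨y, hy, z, hz, r, rfl⟩ := ih x
      obtain ⟨y', hy', z', hz', r', rfl⟩ := step1 K r
      refine ⟨y + (p ^ n : ℕ) • y', add_mem hy (nsmul_mem hy' _), z + p ^ n * z',
        add_mem hz (Ideal.mul_mem_left _ _ hz'), r', ?_⟩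
      rw [nsmul_eq_mul]; push_cast; ring
  refine det_aux p R M ν hmono E (fun i => he _ _) s φ hφ ?_ a
  rw [eq_top_iff]
  rintro x -
  obtain ⟨y, hy, z, hz, r, rfl⟩ := step2 (ν s) (ν s) x
  rw [add_assoc]
  refine add_mem (AddSubgroup.closure_mono Set.subset_union_left hy)
    (AddSubgroup.subset_closure (Or.inr ?_))
  exact add_mem hz (Ideal.mul_mem_right _ _ (Ideal.pow_mem_pow hp _))
end

section
/- Let n ≥ 2, d ≥ 1 and ε > 0. There exists a constant C = C(d,n,ε) with the following property. Let F ∈ ℤ[x_0,…,x_n] be a primitive homogeneous polynomial of degree d which is irreducible over ℚ, defining X = {F = 0} ⊂ P^n, and set r = n−1. Let < be a graded monomial ordering on the monomials in x_0,…,x_n, let x_0^{α_0}⋯x_n^{α_n} be the leading monomial of F, and set a_m = (d−α_m)/(nd) for 0 ≤ m ≤ n. Let B_0,…,B_n ≥ 1 be reals, let p_1,…,p_t be distinct primes, and for each i let P_i ∈ P^n(𝔽_{p_i}) be a point on the reduction X_{p_i} of multiplicity μ_i ≥ 1, and suppose that p_1^{(d/μ_1)^{1/r}}⋯p_t^{(d/μ_t)^{1/r}}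 ≥ (B_0^{a_0}⋯B_n^{a_n})^{(r+1)/r}·(B_0⋯B_n)^ε. Then there exists a homogeneous polynomial G ∈ ℚ[x_0,…,x_n] of degree at most C which is not divisible by F and which vanishes at every rational point of X representable by a primitive integer tuple (x_0,…,x_n) with |x_m| ≤ B_m for all m whose reduction mod p_i equals P_i for every i. -/
open MvPolynomial

/-- `v` reduces mod `p` to the same point of `P^n(𝔽_p)` as the integer tuple `ξ`. -/
def ReducesTo {n : ℕ} (p : ℕ) (ξ : Fin n → ℤ) (v : Fin n → ZMod p) : Prop :=
  ∃ c : ZMod p, c ≠ 0 ∧ (fun i => ((ξ i : ZMod p))) = c • v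

/-- The point of `P^n(𝔽_p)` represented by `v` has multiplicity `μ` on the reduction
`X_p = {F ≡ 0 (mod p)}`. -/
def MultiplicityAt {n : ℕ} (p : ℕ) (F : MvPolynomial (Fin n) ℤ) (v : Fin n → ZMod p)
    (μ : ℕ) : Prop :=
  (∀ j < μ, homogeneousComponent j
      (bind₁ (fun i => C (v i) + X i) (MvPolynomial.map (Int.castRingHom (ZMod p)) F)) = 0) ∧
  homogeneousComponent μ
      (bind₁ (fun i => C (v i) + X i) (MvPolynomial.map (Int.castRingHom (ZMod p)) F)) ≠ 0


/-- Determinant divisibility from a weighted spanning family. -/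
lemma aux_det_dvd {R ι Y : Type*} [CommRing R] [Fintype ι] [DecidableEq ι] [Fintype Y] [DecidableEq Y]
    (π : R) (J : ℕ) (wt : Y → ℕ) (hwt : ∀ y, wt y ≤ J) (w : Y → ι → R)
    (A : ι → Y → R) (M : Matrix ι ι R)
    (hM : ∀ i, M i = ∑ y, A i y • (π ^ wt y • w y)) :
    π ^ (Fintype.card ι * J - ∑ y, (J - wt y)) ∣ M.det := by
  have h1 : M.det = Matrix.detRowAlternating.toMultilinearMap
      (fun i => ∑ y, A i y • (π ^ wt y • w y)) := by
    have : M = fun i => ∑ y, A i y • (π ^ wt y • w y) := funext hM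
    rw [← this]; rfl
  rw [h1, MultilinearMap.map_sum]
  refine Finset.dvd_sum fun φ _ => ?_
  by_cases hφ : Function.Injective φ
  · have h2 : (Matrix.detRowAlternating.toMultilinearMap
        (fun i => A i (φ i) • (π ^ wt (φ i) • w (φ i)))) =
        (∏ i, A i (φ i)) • ((∏ i, π ^ wt (φ i)) • Matrix.det (fun i => w (φ i))) := by
      rw [MultilinearMap.map_smul_univ, MultilinearMap.map_smul_univ]; rfl
    rw [h2, Finset.prod_pow_eq_pow_sum, smul_eq_mul, smul_eq_mul]
    refine Dvd.dvd.mul_left (Dvd.dvd.mul_right (pow_dvd_pow _ ?_) _) _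
    have h3 : ∑ i, (J - wt (φ i)) ≤ ∑ y, (J - wt y) := by
      rw [← Finset.sum_image (s := Finset.univ) (g := φ) (f := fun y => J - wt y) (fun a _ b _ h => hφ h)]
      exact Finset.sum_le_sum_of_subset (Finset.subset_univ _)
    have h4 : ∑ i, (J - wt (φ i)) + ∑ i, wt (φ i) = Fintype.card ι * J := by
      rw [← Finset.sum_add_distrib]
      simp [Nat.sub_add_cancel (hwt _)]
    omega
  · have : ∃ a b, φ a = φ b ∧ a ≠ b := by
      simpa [Function.Injective] using hφ
    obtain ⟨a, b, hab, hne⟩ := this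
    have h2 : (Matrix.detRowAlternating.toMultilinearMap
        (fun i => A i (φ i) • (π ^ wt (φ i) • w (φ i)))) =
        (∏ i, A i (φ i)) • Matrix.det (fun i => (π ^ wt (φ i) • w (φ i))) := by
      rw [MultilinearMap.map_smul_univ]; rfl
    have h3 : Matrix.det (Matrix.of fun i => (π ^ wt (φ i) • w (φ i))) = 0 :=
      Matrix.det_zero_of_row_eq hne (by ext j; simp [hab])
    have h4 : Matrix.det (fun i => (π ^ wt (φ i) • w (φ i))) = 0 := h3
    rw [h2]
    exact ⟨0, by erw [h4]; simp⟩

/-- Version with a span plus a remainder. -/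
lemma aux_det_dvd' {R ι Y : Type*} [CommRing R] [Fintype ι] [DecidableEq ι] [Fintype Y] [DecidableEq Y]
    (π : R) (J : ℕ) (wt : Y → ℕ) (hwt : ∀ y, wt y ≤ J) (w : Y → ι → R)
    (M : Matrix ι ι R)
    (hM : ∀ i, ∃ (A : Y → R) (N : ι → R), M i = ∑ y, A y • (π ^ wt y • w y) + π ^ J • N) :
    π ^ (Fintype.card ι * J - ∑ y, (J - wt y)) ∣ M.det := by
  choose A N hM using hM
  have := aux_det_dvd π J (Sum.elim wt (fun _ : ι => J)) (by rintro (y | y) <;> simp [hwt])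
    (Sum.elim w (fun j => Pi.single j 1)) (fun i => Sum.elim (A i) (N i)) M (by
      intro i
      rw [hM i, Fintype.sum_sum_type]
      simp only [Sum.elim_inl, Sum.elim_inr]
      congr 1
      ext j
      simp [Finset.sum_apply, Pi.single_apply, mul_comm])
  simpa [Fintype.sum_sum_type] using this

lemma aux_not_dvd {n : ℕ} {K : Type*} [Field K] (F G : MvPolynomial (Fin n) K)
    (lo : LinearOrder (Fin n →₀ ℕ))
    (hadd : ∀ α β γ : Fin n →₀ ℕ, lo.lt α β → lo.lt (α + γ) (β + γ))
    (αs : Fin n →₀ ℕ) (hα : αs ∈ F.support) (hmax : ∀ β ∈ F.support, lo.le β αs)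
    (hG : G ≠ 0) (hGs : ∀ β ∈ G.support, ¬ ∀ m, αs m ≤ β m) : ¬ F ∣ G := by
  rintro ⟨H, rfl⟩
  have hH : H ≠ 0 := by rintro rfl; simp at hG
  obtain ⟨β, hβ, hβmax⟩ := @Finset.exists_max_image _ _ lo H.support id (by simpa using hH)
  apply hGs (αs + β) _ (by simp)
  rw [mem_support_iff, coeff_mul, Finset.sum_eq_single (αs, β)]
  · exact mul_ne_zero (mem_support_iff.1 hα) (mem_support_iff.1 hβ)
  · rintro ⟨a, b⟩ hab hne
    rw [Finset.HasAntidiagonal.mem_antidiagonal] at hab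
    simp only at hab ⊢
    by_contra hcon
    have ha : a ∈ F.support := by rw [mem_support_iff]; exact left_ne_zero_of_mul hcon
    have hb : b ∈ H.support := by rw [mem_support_iff]; exact right_ne_zero_of_mul hcon
    have h1 := hmax a ha
    have h2 := hβmax b hb
    simp only [id] at h2
    by_cases haa : a = αs
    · subst haa
      have : b = β := by simpa using hab
      exact hne (by rw [this])
    · have h3 : lo.lt a αs := @lt_of_le_of_ne _ lo.toPartialOrder _ _ h1 haa
      have h4 := hadd _ _ b h3
      by_cases hbb : b = β
      · subst hbb
        rw [hab] at h4
        exact @lt_irrefl _ lo.toPreorder _ h4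
      · have h5 : lo.lt b β := @lt_of_le_of_ne _ lo.toPartialOrder _ _ h2 hbb
        have h6 := hadd _ _ αs h5
        rw [add_comm b, add_comm β] at h6
        have := @lt_trans _ lo.toPreorder _ _ _ h4 h6
        rw [hab] at this
        exact @lt_irrefl _ lo.toPreorder _ this
  · simp

/-- Either a nonzero combination vanishes on `S`, or there is a nonzero determinant. -/
lemma aux_dichotomy {n : ℕ} (A : Finset (Fin n →₀ ℕ)) (S : Set (Fin n → ℤ)) :
    (∃ G : MvPolynomial (Fin n) ℚ, G ≠ 0 ∧ G.support ⊆ A ∧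
      ∀ ξ ∈ S, eval (fun m => (ξ m : ℚ)) G = 0) ∨
    ∃ ξ : A → Fin n → ℤ, (∀ i, ξ i ∈ S) ∧
      (Matrix.of fun i j : A => ∏ m, (ξ j m) ^ (i.1 m)).det ≠ 0 := by
  classical
  let row : (Fin n → ℤ) → (A → ℚ) := fun ξ i => ∏ m, (ξ m : ℚ) ^ (i.1 m)
  by_cases hsp : Submodule.span ℚ (row '' S) = ⊤
  · right
    obtain ⟨f, hf, hf2, hli⟩ := Submodule.exists_fun_fin_finrank_span_eq ℚ (row '' S)
    have hc : Module.finrank ℚ (Submodule.span ℚ (row '' S)) = Fintype.card A := by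
      rw [hsp, finrank_top, Module.finrank_fintype_fun_eq_card]
    let e : A ≃ Fin (Module.finrank ℚ (Submodule.span ℚ (row '' S))) :=
      Fintype.equivOfCardEq (by rw [Fintype.card_fin, hc])
    choose ξ hξ hξ2 using hf
    refine ⟨fun i => ξ (e i), fun i => hξ _, ?_⟩
    have hli2 : LinearIndependent ℚ (fun i => f (e i)) := hli.comp e e.injective
    have hu : IsUnit (Matrix.of fun i j : A => f (e i) j) :=
      Matrix.linearIndependent_rows_iff_isUnit.1 hli2
    rw [Matrix.isUnit_iff_isUnit_det, isUnit_iff_ne_zero] at hu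
    intro h0
    apply hu
    rw [← Matrix.det_transpose]
    have := congrArg (Int.castRingHom ℚ) h0
    rw [RingHom.map_det, map_zero] at this
    rw [← this]
    congr 1
    ext i j
    simp only [Matrix.transpose_apply, Matrix.of_apply, RingHom.mapMatrix_apply, Matrix.map_apply,
      ← hξ2, row]
    simp
  · left
    obtain ⟨φ, hφ, hφ2⟩ := Submodule.exists_le_ker_of_lt_top _ (lt_top_iff_ne_top.2 hsp)
    let c : A → ℚ := fun i => φ (Pi.single i 1)
    have hφc : ∀ x, φ x = ∑ i, x i * c i := by
      intro x
      conv_lhs => rw [pi_eq_sum_univ' x]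
      simp [c]
    refine ⟨∑ i : A, monomial i.1 (c i), ?_, ?_, ?_⟩
    · intro h0
      apply hφ
      have hc0 : ∀ i, c i = 0 := by
        intro i
        have := congrArg (coeff i.1) h0
        rw [coeff_sum] at this
        rw [Finset.sum_eq_single i (fun b _ hb => by
          rw [coeff_monomial, if_neg (fun h => hb (Subtype.ext h))]) (by simp), coeff_monomial,
          if_pos rfl, coeff_zero] at this
        exact this
      ext i
      simpa [c] using hc0 i
    · intro β hβ
      have := MvPolynomial.support_sum hβ
      simp only [Finset.mem_biUnion] at this
      obtain ⟨i, _, hi⟩ := this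
      have := support_monomial_subset hi
      simp only [Finset.mem_singleton] at this
      rw [this]; exact i.2
    · intro ξ hξ
      have h1 : φ (row ξ) = 0 := by
        have := hφ2 (Submodule.subset_span (Set.mem_image_of_mem row hξ))
        simpa using this
      rw [hφc] at h1
      rw [map_sum, ← h1]
      refine Finset.sum_congr rfl fun i _ => ?_
      rw [eval_monomial, mul_comm]
      congr 1
      rw [Finsupp.prod_fintype _ _ (by simp)]

lemma aux_arch {n : ℕ} (A : Finset (Fin n →₀ ℕ)) (ξ : A → Fin n → ℤ) (B : Fin n → ℝ)
    (hB : ∀ i m, (|ξ i m| : ℝ) ≤ B m) :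
    |((Matrix.of fun i j : A => ∏ m, (ξ j m) ^ (i.1 m)).det : ℝ)| ≤
      (A.card).factorial * ∏ m, B m ^ (∑ β ∈ A, β m) := by
  classical
  rw [Matrix.det_apply, Int.cast_sum]
  refine (Finset.abs_sum_le_sum_abs _ _).trans ?_
  have : ∀ σ ∈ (Finset.univ : Finset (Equiv.Perm A)), |((Equiv.Perm.sign σ •
      ∏ i, (Matrix.of fun i j : A => ∏ m, (ξ j m) ^ (i.1 m)) (σ i) i : ℤ) : ℝ)| ≤
      ∏ m, B m ^ (∑ β ∈ A, β m) := by
    intro σ _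
    have h1 : |((Equiv.Perm.sign σ •
      ∏ i, (Matrix.of fun i j : A => ∏ m, (ξ j m) ^ (i.1 m)) (σ i) i : ℤ) : ℝ)| =
        ∏ i : A, ∏ m, |(ξ i m : ℝ)| ^ ((σ i).1 m) := by
      have : |(Equiv.Perm.sign σ •
        ∏ i, (Matrix.of fun i j : A => ∏ m, (ξ j m) ^ (i.1 m)) (σ i) i : ℤ)| =
        ∏ i : A, ∏ m, |ξ i m| ^ ((σ i).1 m) := by
        rcases Int.units_eq_one_or (Equiv.Perm.sign σ) with h | h <;>
          simp [h, Finset.abs_prod, abs_pow]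
      rw [← Int.cast_abs, this]
      push_cast
      rfl
    rw [h1]
    calc ∏ i : A, ∏ m, |(ξ i m : ℝ)| ^ ((σ i).1 m) ≤ ∏ i : A, ∏ m, B m ^ ((σ i).1 m) := by
          refine Finset.prod_le_prod (fun i _ => by positivity) fun i _ => ?_
          refine Finset.prod_le_prod (fun i _ => by positivity) fun m _ => ?_
          exact pow_le_pow_left₀ (abs_nonneg _) (hB i m) _
      _ = ∏ m, B m ^ (∑ β ∈ A, β m) := by
          rw [Equiv.prod_comp σ (fun i : A => ∏ m, B m ^ (i.1 m)), Finset.prod_comm]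
          refine Finset.prod_congr rfl fun m _ => ?_
          rw [Finset.prod_pow_eq_pow_sum, Finset.sum_coe_sort A (fun β => β m)]
  refine (Finset.sum_le_sum this).trans ?_
  simp [Fintype.card_perm]

lemma aux_card_full (n k : ℕ) :
    ((Finset.univ : Finset (Fin (n+1))).finsuppAntidiag k).card = (k + n).choose n := by
  rw [Finset.card_finsuppAntidiag_nat_eq_choose]
  simp only [Finset.card_univ, Fintype.card_fin]
  rw [show n + 1 + k - 1 = k + n by omega, Nat.choose_symm_add]

lemma aux_card_mon (n k d : ℕ) (αs : Fin (n+1) →₀ ℕ) (hα : ∑ i, αs i = d) (hk : d ≤ k) :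
    ((Finset.univ.finsuppAntidiag k).filter (fun β => ¬ ∀ m, αs m ≤ β m)).card
      + (k - d + n).choose n = (k + n).choose n := by
  rw [← aux_card_full, ← aux_card_full, ← Finset.card_filter_add_card_filter_not (s := Finset.univ.finsuppAntidiag k)
    (fun β : Fin (n+1) →₀ ℕ => ∀ m, αs m ≤ β m), add_comm]
  congr 1
  refine Finset.card_bij (fun γ _ => γ + αs) ?_ ?_ ?_
  · intro γ hγ
    simp only [Finset.mem_finsuppAntidiag, Finset.mem_filter] at hγ ⊢
    refine ⟨⟨?_, by simp⟩, by simp⟩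
    rw [Finsupp.coe_add]
    simp only [Pi.add_apply, Finset.sum_add_distrib, hα, hγ.1]
    omega
  · intro a _ b _ h
    simpa using h
  · intro β hβ
    simp only [Finset.mem_finsuppAntidiag, Finset.mem_filter] at hβ
    have h1 : β - αs + αs = β := tsub_add_cancel_of_le (fun m => hβ.2 m)
    refine ⟨β - αs, ?_, h1⟩
    simp only [Finset.mem_finsuppAntidiag]
    refine ⟨?_, by simp⟩
    have h2 : ∑ i, ((β - αs) + αs) i = k := by rw [h1]; exact hβ.1.1
    have h3 : ∑ i, ((β - αs) + αs) i = ∑ i, (β - αs) i + ∑ i, αs i := by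
      rw [← Finset.sum_add_distrib]; rfl
    rw [hα, h2] at h3
    change ∑ i, (β - αs) i = k - d
    rw [h3]; simp

lemma aux_choose_ge (x n d : ℕ) (hn : 1 ≤ n) :
    x.choose n + d * x.choose (n-1) ≤ (x + d).choose n := by
  obtain ⟨n, rfl⟩ : ∃ l, n = l + 1 := ⟨n - 1, by omega⟩
  induction d with
  | zero => simp
  | succ d ih =>
    rw [← add_assoc, Nat.choose_succ_succ]
    have : x.choose n ≤ (x+d).choose n := Nat.choose_le_choose _ (by omega)
    simp only [Nat.add_sub_cancel] at *
    nlinarith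

lemma aux_card_mon_ge (n k d : ℕ) (hn : 1 ≤ n) (αs : Fin (n+1) →₀ ℕ) (hα : ∑ i, αs i = d) (hk : d ≤ k) :
    d * (k - d + n).choose (n - 1) ≤
    ((Finset.univ.finsuppAntidiag k).filter (fun β => ¬ ∀ m, αs m ≤ β m)).card := by
  have h1 := aux_card_mon n k d αs hα hk
  have h2 := aux_choose_ge (k - d + n) n d hn
  rw [show k - d + n + d = k + n by omega] at h2
  omega

lemma aux_slice_card (n k c : ℕ) (hn : 1 ≤ n) (i : Fin (n+1)) :
    ((Finset.univ.finsuppAntidiag k).filter (fun β : Fin (n+1) →₀ ℕ => β i = c)).card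
      ≤ (k + n - 1).choose (n - 1) := by
  have h1 : ((Finset.univ.finsuppAntidiag k).filter (fun β : Fin (n+1) →₀ ℕ => β i = c)).card ≤
      ((Finset.univ.erase i).finsuppAntidiag (k - c)).card := by
    refine Finset.card_le_card_of_injOn (fun β => β.erase i) ?_ ?_
    · intro β hβ
      simp only [Finset.coe_filter, Set.mem_ofPred_eq, Finset.mem_finsuppAntidiag] at hβ
      simp only [Finset.mem_coe, Finset.mem_finsuppAntidiag]
      constructor
      · have := Finset.add_sum_erase Finset.univ β (Finset.mem_univ i)
        rw [hβ.1.1, hβ.2] at this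
        rw [← this, Nat.add_sub_cancel_left]
        refine Finset.sum_congr rfl fun j hj => ?_
        rw [Finsupp.erase_ne (Finset.ne_of_mem_erase hj)]
      · intro j hj
        simp at hj ⊢
        exact hj.1
    · intro a ha b hb hab
      simp only [Finset.coe_filter, Set.mem_ofPred_eq] at ha hb
      ext j
      by_cases hj : j = i
      · subst hj; rw [ha.2, hb.2]
      · have := DFunLike.congr_fun hab j
        simpa [Finsupp.erase_ne hj] using this
  refine h1.trans ?_
  rw [Finset.card_finsuppAntidiag_nat_eq_choose, Finset.card_erase_of_mem (Finset.mem_univ _)]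
  simp only [Finset.card_univ, Fintype.card_fin, Nat.add_sub_cancel]
  rw [show n + (k - c) - 1 = (k - c) + (n - 1) by omega, Nat.choose_symm_add]
  exact Nat.choose_le_choose _ (by omega)

lemma aux_slice_symm (n k c : ℕ) (i m m' : Fin (n+1)) (hm : m ≠ i) (hm' : m' ≠ i) :
    ∑ β ∈ (Finset.univ.finsuppAntidiag k).filter (fun β : Fin (n+1) →₀ ℕ => β i = c), β m =
    ∑ β ∈ (Finset.univ.finsuppAntidiag k).filter (fun β : Fin (n+1) →₀ ℕ => β i = c), β m' := by
  have key : ∀ β ∈ (Finset.univ.finsuppAntidiag k).filter (fun β : Fin (n+1) →₀ ℕ => β i = c),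
      β.equivMapDomain (Equiv.swap m m') ∈
      (Finset.univ.finsuppAntidiag k).filter (fun β : Fin (n+1) →₀ ℕ => β i = c) := by
    intro β hβ
    simp only [Finset.mem_filter, Finset.mem_finsuppAntidiag, Finsupp.equivMapDomain_apply] at hβ ⊢
    refine ⟨⟨?_, by simp⟩, ?_⟩
    · rw [← hβ.1.1]
      exact Equiv.sum_comp (Equiv.swap m m').symm β
    · rw [Equiv.symm_swap, Equiv.swap_apply_of_ne_of_ne hm.symm hm'.symm]; exact hβ.2
  refine Finset.sum_nbij' (fun β => β.equivMapDomain (Equiv.swap m m'))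
    (fun β => β.equivMapDomain (Equiv.swap m m')) key key ?_ ?_ ?_
  · intro β _; ext j; simp
  · intro β _; ext j; simp
  · intro β _; simp

lemma aux_slice_sum (n k c : ℕ) (hn : 1 ≤ n) (i m : Fin (n+1)) (hm : m ≠ i) :
    n * ∑ β ∈ (Finset.univ.finsuppAntidiag k).filter (fun β : Fin (n+1) →₀ ℕ => β i = c), β m
      ≤ k * (k + n - 1).choose (n - 1) := by
  have h1 : n * ∑ β ∈ (Finset.univ.finsuppAntidiag k).filter (fun β : Fin (n+1) →₀ ℕ => β i = c), β m
      = ∑ m' ∈ Finset.univ.erase i,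
        ∑ β ∈ (Finset.univ.finsuppAntidiag k).filter (fun β : Fin (n+1) →₀ ℕ => β i = c), β m' := by
    rw [Finset.sum_congr rfl (fun m' hm' =>
      aux_slice_symm n k c i m' m (Finset.ne_of_mem_erase hm') hm), Finset.sum_const,
      Finset.card_erase_of_mem (Finset.mem_univ _)]
    simp
  rw [h1, Finset.sum_comm]
  calc _ ≤ ∑ β ∈ (Finset.univ.finsuppAntidiag k).filter (fun β : Fin (n+1) →₀ ℕ => β i = c), k := by
        refine Finset.sum_le_sum fun β hβ => ?_
        simp only [Finset.mem_filter, Finset.mem_finsuppAntidiag] at hβ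
        rw [← hβ.1.1]
        exact Finset.sum_le_sum_of_subset (Finset.erase_subset _ _)
    _ ≤ _ := by
        rw [Finset.sum_const, smul_eq_mul, mul_comm]
        exact Nat.mul_le_mul_left _ (aux_slice_card n k c hn i)

lemma aux_sigma (n k d : ℕ) (hn : 1 ≤ n) (αs : Fin (n+1) →₀ ℕ) (hα : ∑ i, αs i = d) (m : Fin (n+1)) :
    n * ∑ β ∈ (Finset.univ.finsuppAntidiag k).filter (fun β => ¬ ∀ m, αs m ≤ β m), β m
      ≤ ((d - αs m) * k + n * (d * d)) * (k + n - 1).choose (n - 1) := by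
  set full := (Finset.univ : Finset (Fin (n+1))).finsuppAntidiag k with hfull
  set Cc := (k + n - 1).choose (n - 1) with hCc
  have h1 : ∑ β ∈ full.filter (fun β => ¬ ∀ m, αs m ≤ β m), β m ≤
      ∑ i, ∑ c ∈ Finset.range (αs i), ∑ β ∈ full.filter (fun β => β i = c), β m := by
    calc _ = ∑ β ∈ full, if (¬ ∀ m, αs m ≤ β m) then β m else 0 := by rw [Finset.sum_filter]
      _ ≤ ∑ β ∈ full, ∑ i, ∑ c ∈ Finset.range (αs i), if β i = c then β m else 0 := by
          refine Finset.sum_le_sum fun β _ => ?_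
          by_cases h : ∀ m, αs m ≤ β m
          · simp [h]
          · rw [if_pos h]
            push Not at h
            obtain ⟨i, hi⟩ := h
            refine le_trans ?_ (Finset.single_le_sum (f := fun i => ∑ c ∈ Finset.range (αs i), if β i = c then β m else 0) (fun _ _ => Nat.zero_le _) (Finset.mem_univ i))
            refine le_trans ?_ (Finset.single_le_sum (f := fun c => if β i = c then β m else 0) (fun _ _ => Nat.zero_le _) (Finset.mem_range.2 hi))
            simp
      _ = _ := by
          rw [Finset.sum_comm]
          refine Finset.sum_congr rfl fun i _ => ?_
          rw [Finset.sum_comm]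
          refine Finset.sum_congr rfl fun c _ => ?_
          rw [Finset.sum_filter]
  have hαm : αs m ≤ d := by
    rw [← hα]; exact Finset.single_le_sum (f := αs) (fun _ _ => Nat.zero_le _) (Finset.mem_univ m)
  have h2 : ∀ i ∈ Finset.univ.erase m, n * ∑ c ∈ Finset.range (αs i), ∑ β ∈ full.filter (fun β => β i = c), β m
      ≤ αs i * (k * Cc) := by
    intro i hi
    rw [Finset.mul_sum]
    refine (Finset.sum_le_card_nsmul _ _ (k * Cc) fun c _ => 
      aux_slice_sum n k c hn i m (Finset.ne_of_mem_erase hi).symm).trans ?_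
    simp
  have h3 : ∑ c ∈ Finset.range (αs m), ∑ β ∈ full.filter (fun β => β m = c), β m
      ≤ d * (d * Cc) := by
    refine (Finset.sum_le_card_nsmul _ _ (d * Cc) fun c hc => ?_).trans ?_
    · refine (Finset.sum_le_card_nsmul _ _ d fun β hβ => ?_).trans ?_
      · simp only [Finset.mem_filter] at hβ
        rw [hβ.2]
        exact (Finset.mem_range.1 hc).le.trans hαm
      · rw [smul_eq_mul, mul_comm]
        exact Nat.mul_le_mul_left _ (aux_slice_card n k c hn m)
    · rw [Finset.card_range, smul_eq_mul]
      exact Nat.mul_le_mul_right _ hαm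
  have h4 := Finset.sum_le_sum h2
  rw [← Finset.sum_mul] at h4
  have h5 : ∑ i ∈ Finset.univ.erase m, αs i = d - αs m := by
    have := Finset.add_sum_erase Finset.univ αs (Finset.mem_univ m)
    omega
  rw [h5] at h4
  calc _ ≤ n * ∑ i, ∑ c ∈ Finset.range (αs i), ∑ β ∈ full.filter (fun β => β i = c), β m :=
        Nat.mul_le_mul_left _ h1
    _ = n * ∑ c ∈ Finset.range (αs m), ∑ β ∈ full.filter (fun β => β m = c), β m +
        ∑ i ∈ Finset.univ.erase m, n * ∑ c ∈ Finset.range (αs i), ∑ β ∈ full.filter (fun β => β i = c), β m := by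
        rw [← Finset.add_sum_erase Finset.univ _ (Finset.mem_univ m), mul_add, Finset.mul_sum (s := Finset.univ.erase m)]
    _ ≤ n * (d * (d * Cc)) + (d - αs m) * (k * Cc) := Nat.add_le_add (Nat.mul_le_mul_left _ h3) h4
    _ = _ := by ring

/-- Exponents that are not divisible by `γ`, do not involve `m0`, of degree `< J`. -/
def auxGood (n J : ℕ) (γ : Fin (n+1) →₀ ℕ) (m0 : Fin (n+1)) : Finset (Fin (n+1) →₀ ℕ) :=
  ((Finset.range J).biUnion fun j => Finset.univ.finsuppAntidiag j).filter
    (fun β => β m0 = 0 ∧ ¬ ∀ m, γ m ≤ β m)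

lemma mem_auxGood {n J : ℕ} {γ : Fin (n+1) →₀ ℕ} {m0 : Fin (n+1)} {β : Fin (n+1) →₀ ℕ} :
    β ∈ auxGood n J γ m0 ↔ ∑ i, β i < J ∧ β m0 = 0 ∧ ¬ ∀ m, γ m ≤ β m := by
  simp [auxGood, Finset.mem_finsuppAntidiag]

lemma aux_good_sum (n J : ℕ) (γ : Fin (n+1) →₀ ℕ) (m0 : Fin (n+1)) (hγ : γ m0 = 0) :
    ∑ β ∈ auxGood n J γ m0, (J - ∑ i, β i) ≤ (∑ i, γ i) * (J + n).choose n := by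
  classical
  have h1 : ∑ β ∈ auxGood n J γ m0, (J - ∑ i, β i) =
      ((auxGood n J γ m0).sigma (fun β => Finset.range (J - ∑ i, β i))).card := by
    simp [Finset.card_sigma]
  have h2 : (∑ i, γ i) * (J - 1 + n).choose n =
      ((Finset.univ.sigma (fun i => Finset.range (γ i))) ×ˢ
        (Finset.univ : Finset (Fin (n+1))).finsuppAntidiag (J - 1)).card := by
    rw [Finset.card_product, aux_card_full]
    simp [Finset.card_sigma]
  refine le_trans ?_ (Nat.mul_le_mul_left _ (Nat.choose_le_choose n (show J - 1 + n ≤ J + n by omega)))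
  rw [h1, h2]
  refine Finset.card_le_card_of_surjOn (fun x => ⟨(x.2.update m0 0).update x.1.1 x.1.2, x.2 m0⟩) ?_
  rintro ⟨β, l⟩ hβ
  simp only [Finset.mem_coe, Finset.mem_sigma, mem_auxGood, Finset.mem_range] at hβ
  obtain ⟨⟨hβJ, hβ0, hβγ⟩, hl⟩ := hβ
  push Not at hβγ
  obtain ⟨i, hi⟩ := hβγ
  have him : i ≠ m0 := by rintro rfl; omega
  · refine ⟨⟨⟨i, β i⟩, β + Finsupp.single m0 l + Finsupp.single i (J - 1 - ∑ i, β i - l)⟩, ?_, ?_⟩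
    · simp only [Finset.mem_coe, Finset.mem_product, Finset.mem_sigma, Finset.mem_univ, true_and,
        Finset.mem_range, hi, Finset.mem_finsuppAntidiag]
      refine ⟨?_, by simp⟩
      rw [Finsupp.coe_add, Finsupp.coe_add]
      simp only [Pi.add_apply, Finset.sum_add_distrib, Finsupp.single_apply]
      simp
      omega
    · have e1 : ((β + Finsupp.single m0 l + Finsupp.single i (J - 1 - ∑ i, β i - l)).update m0 0).update i (β i) = β := by
        ext j
        simp only [Finsupp.coe_update, Function.update_apply]
        split_ifs with h1 h2
        · rw [h1]
        · rw [h2, hβ0]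
        · simp [Ne.symm h1, Ne.symm h2]
      have e2 : (β + Finsupp.single m0 l + Finsupp.single i (J - 1 - ∑ i, β i - l)) m0 = l := by
        simp [hβ0, him]
      simp only [e1, e2]
lemma aux_reduce {R ι : Type*} [CommRing R] [Nontrivial R] {n : ℕ} (π : R) (J : ℕ) (y η : ι → Fin (n+1) → R)
    (m0 : Fin (n+1)) (hy0 : ∀ j, y j m0 = 0) (hη : ∀ j m, y j m = π * η j m)
    (g : MvPolynomial (Fin (n+1)) R) (hg : ∀ j, eval (y j) g = 0)
    (γ : Fin (n+1) →₀ ℕ) (hγ : IsUnit (coeff γ g))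
    (hlow : ∀ β : Fin (n+1) →₀ ℕ, β m0 = 0 → β ≠ γ → ∑ i, β i ≤ ∑ i, γ i →
      (∑ i, β i = ∑ i, γ i → ¬ MonomialOrder.lex.toSyn β < MonomialOrder.lex.toSyn γ) →
      π ∣ coeff β g)
    (T : Submodule R (ι → R))
    (hT1 : ∀ β ∈ auxGood n J γ m0, (fun j => ∏ m, y j m ^ β m) ∈ T)
    (hT2 : ∀ N : ι → R, π ^ J • N ∈ T)
    (q : MvPolynomial (Fin (n+1)) R) : (fun j => eval (y j) q) ∈ T := by
  have key : ∀ u w : ℕ, ∀ b, ∀ (a : ℕ) (β : Fin (n+1) →₀ ℕ), J - a = u → J - ∑ i, β i = w →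
      MonomialOrder.lex.toSyn β = b → π ^ a • (fun j => ∏ m, y j m ^ β m) ∈ T := by
    intro u
    induction u using Nat.strong_induction_on with
    | _ u ihu =>
    intro w
    induction w using Nat.strong_induction_on with
    | _ w ihw =>
    intro b
    induction b using WellFoundedLT.induction with
    | _ b ihb =>
    intro a β hu hw hb
    by_cases h1 : J ≤ a
    · have : π ^ a • (fun j => ∏ m, y j m ^ β m) = π ^ J • (π ^ (a - J) • fun j => ∏ m, y j m ^ β m) := by
        rw [smul_smul, ← pow_add, Nat.add_sub_cancel' h1]
      rw [this]; exact hT2 _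
    by_cases h2 : J ≤ ∑ i, β i
    · have : (fun j => ∏ m, y j m ^ β m) = π ^ J • (π ^ (∑ i, β i - J) • fun j => ∏ m, η j m ^ β m) := by
        rw [smul_smul, ← pow_add, Nat.add_sub_cancel' h2]
        ext j
        simp only [Pi.smul_apply, smul_eq_mul, hη, mul_pow, Finset.prod_mul_distrib,
          Finset.prod_pow_eq_pow_sum]
      rw [this]; exact T.smul_mem _ (hT2 _)
    have hzero : ∀ β : Fin (n+1) →₀ ℕ, β m0 ≠ 0 → (fun j => ∏ m, y j m ^ β m) = 0 := by
      intro β hβ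
      ext j
      exact Finset.prod_eq_zero (Finset.mem_univ m0) (by rw [hy0, zero_pow hβ])
    by_cases h3 : β m0 = 0
    swap
    · rw [hzero β h3, smul_zero]; exact T.zero_mem
    by_cases h4 : ∀ m, γ m ≤ β m
    swap
    · exact T.smul_mem _ (hT1 β (mem_auxGood.2 ⟨by omega, h3, h4⟩))
    obtain ⟨δ, rfl⟩ : ∃ δ, β = γ + δ := ⟨β - γ, (add_tsub_cancel_of_le (fun m => h4 m)).symm⟩
    have hδ0 : δ m0 = 0 := by simp at h3; exact h3.2
    have hsum : ∀ a b : Fin (n+1) →₀ ℕ, ∑ i, (a + b) i = ∑ i, a i + ∑ i, b i := by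
      intro a b; rw [← Finset.sum_add_distrib]; rfl
    have hγs : γ ∈ g.support := by
      rw [mem_support_iff]
      intro h0
      rw [h0] at hγ; exact not_isUnit_zero hγ
    have hrel : coeff γ g • (π ^ a • fun j => ∏ m, y j m ^ (γ + δ) m) =
        - ∑ β' ∈ g.support.erase γ, coeff β' g • (π ^ a • fun j => ∏ m, y j m ^ (β' + δ) m) := by
      rw [eq_neg_iff_add_eq_zero, Finset.add_sum_erase _
        (fun β' => coeff β' g • (π ^ a • fun j => ∏ m, y j m ^ (β' + δ) m)) hγs]
      ext j
      have := hg j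
      rw [eval_eq'] at this
      have h5 : ∑ d ∈ g.support, (coeff d g * ∏ i, y j i ^ d i) * (π ^ a * ∏ m, y j m ^ δ m) = 0 := by
        rw [← Finset.sum_mul, this, zero_mul]
      rw [Finset.sum_apply, Pi.zero_apply, ← h5]
      refine Finset.sum_congr rfl fun d _ => ?_
      simp only [Pi.smul_apply, smul_eq_mul, Finsupp.add_apply, pow_add, Finset.prod_mul_distrib]
      ring
    have hmem : coeff γ g • (π ^ a • fun j => ∏ m, y j m ^ (γ + δ) m) ∈ T := by
      rw [hrel]
      refine T.neg_mem (T.sum_mem fun β' hβ' => ?_)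
      have hne := Finset.ne_of_mem_erase hβ'
      by_cases h6 : β' m0 = 0
      swap
      · rw [hzero (β' + δ) (by simp [h6]), smul_zero, smul_zero]; exact T.zero_mem
      rw [hsum] at hw h2
      by_cases h7 : ∑ i, γ i < ∑ i, β' i
      · refine T.smul_mem _ (ihw (J - ∑ i, (β' + δ) i) ?_ _ a (β' + δ) hu rfl rfl)
        rw [hsum]; omega
      by_cases h8 : ∑ i, β' i = ∑ i, γ i ∧ MonomialOrder.lex.toSyn β' < MonomialOrder.lex.toSyn γ
      · refine T.smul_mem _ (ihb (MonomialOrder.lex.toSyn (β' + δ)) ?_ a (β' + δ) hu ?_ rfl)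
        · rw [← hb, map_add, map_add]
          exact add_lt_add_left h8.2 _
        · rw [hsum, h8.1]; exact hw
      · obtain ⟨c, hc⟩ := hlow β' h6 hne (by omega) (fun h h' => h8 ⟨h, h'⟩)
        have : coeff β' g • (π ^ a • fun j => ∏ m, y j m ^ (β' + δ) m) =
            c • (π ^ (a+1) • fun j => ∏ m, y j m ^ (β' + δ) m) := by
          rw [hc, smul_smul, smul_smul]; congr 1; ring
        rw [this]
        exact T.smul_mem _ (ihu (J - (a+1)) (by omega) _ _ (a+1) (β' + δ) rfl rfl rfl)
    obtain ⟨c, hc⟩ := hγ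
    rw [← hc] at hmem
    have := T.smul_mem (↑c⁻¹ : R) hmem
    rwa [smul_smul, Units.inv_mul, one_smul] at this
  have : (fun j => eval (y j) q) = ∑ β ∈ q.support, coeff β q • (fun j => ∏ m, y j m ^ β m) := by
    ext j
    rw [eval_eq', Finset.sum_apply]
    rfl
  rw [this]
  refine T.sum_mem fun β _ => T.smul_mem _ ?_
  have := key _ _ _ 0 β rfl rfl rfl
  simpa using this

lemma aux_totalDegree {N d : ℕ} {K : Type*} [CommRing K] (f : MvPolynomial (Fin N) K)
    (hf : f.IsHomogeneous d) (v : Fin N → K) :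
    (bind₁ (fun i => C (v i) + X i) f).totalDegree ≤ d := by
  rw [f.as_sum, map_sum]
  refine totalDegree_finsetSum_le fun a ha => ?_
  rw [bind₁_monomial]
  refine (totalDegree_mul _ _).trans ?_
  rw [totalDegree_C, zero_add]
  refine (totalDegree_finsetProd _ _).trans ?_
  have := hf (mem_support_iff.1 ha)
  rw [Finsupp.weight_apply, Finsupp.sum] at this
  rw [← this]
  refine Finset.sum_le_sum fun i _ => ?_
  refine (totalDegree_pow _ _).trans ?_
  simp only [Pi.one_apply, smul_eq_mul]
  refine Nat.mul_le_mul_left _ ?_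
  refine (totalDegree_add _ _).trans ?_
  rw [totalDegree_C]
  by_cases h : Nontrivial K
  · simp
  · rw [not_nontrivial_iff_subsingleton] at h
    have : (X i : MvPolynomial (Fin N) K) = 0 := Subsingleton.elim _ _
    simp [this]

lemma aux_hom_field {N d : ℕ} {K L : Type*} [Field K] [Field L] [Algebra K L]
    (f : MvPolynomial (Fin N) K) (hf : f.IsHomogeneous d) (v : Fin N → K) (u : L) (hu : u ≠ 0)
    (z : Fin N → L) :
    aeval (fun i => u * algebraMap K L (v i) + z i) f =
      ∑ β ∈ (bind₁ (fun i => C (v i) + X i) f).support,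
        algebraMap K L (coeff β (bind₁ (fun i => C (v i) + X i) f)) *
          (u ^ (d - ∑ i, β i) * ∏ i, z i ^ β i) := by
  have h1 : aeval (fun i => u * algebraMap K L (v i) + z i) f =
      u ^ d * aeval (fun i => z i / u) (bind₁ (fun i => C (v i) + X i) f) := by
    rw [aeval_bind₁]
    simp only [map_add, aeval_X, algHom_C]
    rw [aeval_def, aeval_def, eval₂_eq', eval₂_eq', Finset.mul_sum]
    refine Finset.sum_congr rfl fun a ha => ?_
    have := hf (mem_support_iff.1 ha)
    rw [Finsupp.weight_apply, Finsupp.sum_fintype _ _ (by simp)] at this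
    simp only [Pi.one_apply, smul_eq_mul, mul_one] at this
    rw [← this, ← Finset.prod_pow_eq_pow_sum, mul_left_comm, ← Finset.prod_mul_distrib]
    congr 1
    refine Finset.prod_congr rfl fun i _ => ?_
    rw [← mul_pow]
    congr 1
    field_simp
  rw [h1, aeval_def, eval₂_eq', Finset.mul_sum]
  refine Finset.sum_congr rfl fun β hβ => ?_
  have hdeg : ∑ i, β i ≤ d := by
    refine le_trans ?_ (aux_totalDegree f hf v)
    have := le_totalDegree hβ
    rwa [Finsupp.sum_fintype _ _ (by simp)] at this
  rw [mul_left_comm]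
  congr 1
  simp only [div_pow]
  rw [Finset.prod_div_distrib, Finset.prod_pow_eq_pow_sum]
  rw [← Nat.sub_add_cancel hdeg, pow_add, Nat.add_sub_cancel]
  field_simp

lemma aux_comp_zero {N : ℕ} {K : Type*} [CommRing K] (q z : MvPolynomial (Fin N) K) (e μ : ℕ)
    (hz : z.IsHomogeneous e) (h : μ < e) : homogeneousComponent μ (q * z) = 0 := by
  rw [← sum_homogeneousComponent q, Finset.sum_mul, map_sum]
  refine Finset.sum_eq_zero fun j _ => ?_
  rw [homogeneousComponent_of_mem ((mem_homogeneousSubmodule _ _).2 ((homogeneousComponent_isHomogeneous j q).mul hz)), if_neg (by omega)]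

lemma aux_restrict {N d : ℕ} {K : Type*} [Field K]
    (f : MvPolynomial (Fin N) K) (hf : f.IsHomogeneous d) (v : Fin N → K) (m0 : Fin N) (hv : v m0 ≠ 0)
    (μ : ℕ) (hμ : homogeneousComponent μ (bind₁ (fun i => C (v i) + X i) f) ≠ 0) :
    ∃ β : Fin N →₀ ℕ, β m0 = 0 ∧ ∑ i, β i ≤ μ ∧ coeff β (bind₁ (fun i => C (v i) + X i) f) ≠ 0 := by
  by_contra hcon
  push Not at hcon
  apply hμ
  let u : MvPolynomial (Fin N) K := 1 + C ((v m0)⁻¹) * X m0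
  let z : Fin N → MvPolynomial (Fin N) K := fun i => X i - C (v i * (v m0)⁻¹) * X m0
  have hu : u ≠ 0 := by
    intro h
    have := congrArg constantCoeff h
    simp [u] at this
  have hz0 : z m0 = 0 := by
    simp only [z, mul_inv_cancel₀ hv, map_one, one_mul, sub_self]
  have hzh : ∀ i, (z i).IsHomogeneous 1 := by
    intro i
    refine (isHomogeneous_X _ _).sub ?_
    have := (isHomogeneous_C (Fin N) (v i * (v m0)⁻¹)).mul (isHomogeneous_X K m0)
    simpa using this
  have hid : bind₁ (fun i => C (v i) + X i) f =
      ∑ β ∈ (bind₁ (fun i => C (v i) + X i) f).support,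
        C (coeff β (bind₁ (fun i => C (v i) + X i) f)) *
          (u ^ (d - ∑ i, β i) * ∏ i, z i ^ β i) := by
    apply IsFractionRing.injective (MvPolynomial (Fin N) K) (FractionRing (MvPolynomial (Fin N) K))
    have h1 := aux_hom_field (L := FractionRing (MvPolynomial (Fin N) K)) f hf v
      (algebraMap _ _ u) (by simpa using hu) (fun i => algebraMap _ _ (z i))
    rw [map_sum]
    simp only [map_mul, map_pow, map_prod]
    have h2 : ∀ c : K, algebraMap (MvPolynomial (Fin N) K) (FractionRing (MvPolynomial (Fin N) K)) (C c)
        = algebraMap K _ c := by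
      intro c
      rw [IsScalarTower.algebraMap_apply K (MvPolynomial (Fin N) K)]; rfl
    simp only [h2]
    rw [← h1]
    have h3 : ∀ i, algebraMap _ (FractionRing (MvPolynomial (Fin N) K)) u * algebraMap K _ (v i) + algebraMap _ _ (z i)
        = algebraMap (MvPolynomial (Fin N) K) _ (C (v i) + X i) := by
      intro i
      rw [← h2, ← map_mul, ← map_add]
      congr 1
      simp only [u, z, map_mul]
      ring
    simp only [h3]
    rw [bind₁, ← aeval_algebraMap_apply]
    rfl
  rw [hid, map_sum]
  refine Finset.sum_eq_zero fun β hβ => ?_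
  by_cases h0 : β m0 = 0
  · by_cases h1 : ∑ i, β i ≤ μ
    · rw [hcon β h0 h1]; simp
    · rw [← mul_assoc]
      refine aux_comp_zero _ _ (∑ i, β i) _ ?_ (by omega)
      refine IsHomogeneous.prod _ _ _ fun i _ => ?_
      simpa using (hzh i).pow (β i)
  · rw [Finset.prod_eq_zero (Finset.mem_univ m0) (by rw [hz0, zero_pow h0])]
    simp

lemma aux_padic_dvd_iff {p : ℕ} [Fact p.Prime] (x : ℤ_[p]) : PadicInt.toZMod x = 0 ↔ (p : ℤ_[p]) ∣ x := by
  rw [← RingHom.mem_ker, PadicInt.ker_toZMod, PadicInt.maximalIdeal_eq_span_p, Ideal.mem_span_singleton]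

lemma aux_padic_unit_iff {p : ℕ} [Fact p.Prime] (x : ℤ_[p]) : PadicInt.toZMod x ≠ 0 ↔ IsUnit x := by
  rw [← IsLocalRing.notMem_maximalIdeal, ← PadicInt.ker_toZMod, RingHom.mem_ker]

lemma aux_prod_scale {R : Type*} [CommRing R] {N k : ℕ} (b : R) (x : Fin N → R) (β : Fin N →₀ ℕ)
    (hβ : ∑ i, β i = k) : ∏ m, (b * x m) ^ β m = b ^ k * ∏ m, x m ^ β m := by
  simp only [mul_pow, Finset.prod_mul_distrib, Finset.prod_pow_eq_pow_sum, hβ]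

lemma aux_padic {n d k : ℕ} (p : ℕ) (hp : p.Prime) (F : MvPolynomial (Fin (n+1)) ℤ)
    (hF : F.IsHomogeneous d) (v : Fin (n+1) → ZMod p) (hv : v ≠ 0) (μ : ℕ)
    (hμ : MultiplicityAt p F v μ) (A : Finset (Fin (n+1) →₀ ℕ)) (hA : ∀ β ∈ A, ∑ i, β i = k)
    (ξ : A → Fin (n+1) → ℤ) (hξ0 : ∀ j, eval (ξ j) F = 0) (hξ : ∀ j, ReducesTo p (ξ j) v) (J : ℕ) :
    (p : ℤ) ^ (A.card * J - μ * (J + n).choose n) ∣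
      (Matrix.of fun i j : A => ∏ m, (ξ j m) ^ (i.1 m)).det := by
  classical
  have : Fact p.Prime := ⟨hp⟩
  obtain ⟨m0, hm0⟩ : ∃ m0, v m0 ≠ 0 := by
    by_contra h
    push Not at h
    exact hv (funext h)
  have hsurj : Function.Surjective (PadicInt.toZMod (p := p)) := ZMod.ringHom_surjective _
  choose w hw using fun i => hsurj (v i)
  let fZ := MvPolynomial.map (Int.castRingHom ℤ_[p]) F
  let g := bind₁ (fun i => C (w i) + X i) fZ
  have hgred : MvPolynomial.map PadicInt.toZMod g =
      bind₁ (fun i => C (v i) + X i) (MvPolynomial.map (Int.castRingHom (ZMod p)) F) := by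
    simp only [g, fZ]
    rw [map_bind₁, map_map]
    congr 1
    · congr 1; ext1 i; simp [hw]
    · have : (PadicInt.toZMod (p := p)).comp (Int.castRingHom ℤ_[p]) = Int.castRingHom (ZMod p) := RingHom.ext_int _ _
      rw [this]
  have hgc : ∀ β, PadicInt.toZMod (coeff β g) = coeff β
      (bind₁ (fun i => C (v i) + X i) (MvPolynomial.map (Int.castRingHom (ZMod p)) F)) := by
    intro β; rw [← hgred, coeff_map]
  have hFh : (MvPolynomial.map (Int.castRingHom (ZMod p)) F).IsHomogeneous d := hF.map _
  obtain ⟨β0, hβ00, hβ0μ, hβ0⟩ := aux_restrict _ hFh v m0 hm0 μ hμ.2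
  rw [← hgc] at hβ0
  -- choose γ
  let S := g.support.filter (fun β => β m0 = 0 ∧ PadicInt.toZMod (coeff β g) ≠ 0)
  have hmemS : ∀ β, β ∈ S ↔ β m0 = 0 ∧ PadicInt.toZMod (coeff β g) ≠ 0 := by
    intro β
    simp only [S, Finset.mem_filter, mem_support_iff]
    constructor
    · exact fun h => h.2
    · intro h
      refine ⟨fun h0 => h.2 (by rw [h0, map_zero]), h⟩
  obtain ⟨γ1, hγ1, hγ1min⟩ := Finset.exists_min_image S (fun β => ∑ i, β i) ⟨β0, (hmemS _).2 ⟨hβ00, hβ0⟩⟩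
  obtain ⟨γ, hγ, hγmax⟩ := Finset.exists_max_image (S.filter (fun β => ∑ i, β i = ∑ i, γ1 i))
    (fun β => MonomialOrder.lex.toSyn β) ⟨γ1, by simp [hγ1]⟩
  rw [Finset.mem_filter, hmemS] at hγ
  have hγdeg : ∑ i, γ i ≤ μ := by
    rw [hγ.2]
    exact (hγ1min β0 ((hmemS _).2 ⟨hβ00, hβ0⟩)).trans hβ0μ
  have hlow : ∀ β : Fin (n+1) →₀ ℕ, β m0 = 0 → β ≠ γ → ∑ i, β i ≤ ∑ i, γ i →
      (∑ i, β i = ∑ i, γ i → ¬ MonomialOrder.lex.toSyn β < MonomialOrder.lex.toSyn γ) →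
      (p : ℤ_[p]) ∣ coeff β g := by
    intro β h0 hne hle hlex
    rw [← aux_padic_dvd_iff]
    by_contra hcon
    have hβS : β ∈ S := (hmemS _).2 ⟨h0, hcon⟩
    have h1 := hγ1min β hβS
    have h2 : ∑ i, β i = ∑ i, γ i := le_antisymm hle (by rw [hγ.2]; exact h1)
    have h3 := hγmax β (by rw [Finset.mem_filter]; exact ⟨hβS, h2.trans hγ.2⟩)
    exact hlex h2 (lt_of_le_of_ne h3 (fun h => hne (MonomialOrder.lex.toSyn.injective h)))
  -- the points
  have hpt : ∀ j, ∃ b : ℤ_[p], IsUnit b ∧ b * (ξ j m0 : ℤ_[p]) = w m0 ∧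
      ∀ m, (p : ℤ_[p]) ∣ b * (ξ j m : ℤ_[p]) - w m := by
    intro j
    obtain ⟨c, hc, hcv⟩ := hξ j
    have hcv' : ∀ m, ((ξ j m : ℤ) : ZMod p) = c * v m := fun m => by
      have := congrFun hcv m; simpa using this
    have hu1 : IsUnit ((ξ j m0 : ℤ) : ℤ_[p]) := by
      rw [← aux_padic_unit_iff, map_intCast, hcv']
      exact mul_ne_zero hc hm0
    have hu2 : IsUnit (w m0) := by
      rw [← aux_padic_unit_iff, hw]; exact hm0
    obtain ⟨x, hx⟩ := hu1
    have hb : w m0 * (↑x⁻¹ : ℤ_[p]) * (ξ j m0 : ℤ_[p]) = w m0 := by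
      rw [← hx, mul_assoc, Units.inv_mul, mul_one]
    refine ⟨w m0 * (↑x⁻¹ : ℤ_[p]), hu2.mul (Units.isUnit _), hb, fun m => ?_⟩
    rw [← aux_padic_dvd_iff, map_sub, map_mul, map_intCast, hcv', hw]
    have h1 := congrArg PadicInt.toZMod hb
    rw [map_mul, map_intCast, hcv', hw] at h1
    have h2 : PadicInt.toZMod (w m0 * (↑x⁻¹ : ℤ_[p])) * c = 1 := by
      have : PadicInt.toZMod (w m0 * (↑x⁻¹ : ℤ_[p])) * c * v m0 = 1 * v m0 := by
        rw [one_mul, mul_assoc]; exact h1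
      exact mul_right_cancel₀ hm0 this
    rw [← mul_assoc, h2, one_mul, sub_self]
  choose b hbu hb0 η hη using hpt
  let y : A → Fin (n+1) → ℤ_[p] := fun j m => b j * (ξ j m : ℤ_[p]) - w m
  have hy0 : ∀ j, y j m0 = 0 := fun j => by simp only [y, hb0, sub_self]
  have hevg : ∀ j, eval (y j) g = 0 := by
    intro j
    have h1 : eval (y j) g = eval (fun m => b j * (ξ j m : ℤ_[p])) fZ := by
      simp only [g]
      rw [← coe_aeval_eq_eval, ← coe_aeval_eq_eval, RingHom.coe_coe, RingHom.coe_coe, aeval_bind₁]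
      congr 2
      ext1 m
      simp [y]
    have h2 : eval (fun m => (ξ j m : ℤ_[p])) fZ = 0 := by
      simp only [fZ]
      rw [eval_map]
      have := congrArg (Int.castRingHom ℤ_[p]) (hξ0 j)
      rw [map_zero, eval_eq'] at this
      rw [eval₂_eq', ← this]
      simp
    have hfh : fZ.IsHomogeneous d := hF.map _
    rw [h1, eval_eq', ← mul_zero (b j ^ d), ← h2, eval_eq', Finset.mul_sum]
    refine Finset.sum_congr rfl fun a ha => ?_
    have := hfh (mem_support_iff.1 ha)
    rw [Finsupp.weight_apply, Finsupp.sum_fintype _ _ (by simp)] at this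
    simp only [Pi.one_apply, smul_eq_mul, mul_one] at this
    rw [aux_prod_scale _ _ _ this]
    ring
  let mon : auxGood n J γ m0 → A → ℤ_[p] := fun β j => ∏ m, y j m ^ (β.1 m)
  let T : Submodule ℤ_[p] (A → ℤ_[p]) := Submodule.span ℤ_[p] (Set.range mon) ⊔
    LinearMap.range (LinearMap.lsmul ℤ_[p] (A → ℤ_[p]) ((p : ℤ_[p]) ^ J))
  have hT := aux_reduce (p : ℤ_[p]) J y η m0 hy0 hη g hevg γ ((aux_padic_unit_iff _).1 hγ.1.2) hlow T
    (fun β hβ => Submodule.mem_sup_left (Submodule.subset_span ⟨⟨β, hβ⟩, rfl⟩))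
    (fun N => Submodule.mem_sup_right ⟨N, rfl⟩)
  let M : Matrix A A ℤ_[p] := Matrix.of fun i j : A => ∏ m, (b j * (ξ j m : ℤ_[p])) ^ (i.1 m)
  have hMT : ∀ i, M i ∈ T := by
    intro i
    have := hT (∏ m, (C (w m) + X m) ^ (i.1 m))
    convert this using 1
    ext1 j
    simp [M, y]
  have hdvd := aux_det_dvd' (p : ℤ_[p]) J (fun β : auxGood n J γ m0 => ∑ i, β.1 i)
    (fun β => (mem_auxGood.1 β.2).1.le) (fun β j => ∏ m, η j m ^ (β.1 m)) M (by
      intro i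
      obtain ⟨x, hx, z, ⟨N, hN⟩, hxz⟩ := Submodule.mem_sup.1 (hMT i)
      rw [Submodule.mem_span_range_iff_exists_fun] at hx
      obtain ⟨c, hc⟩ := hx
      refine ⟨c, N, ?_⟩
      rw [← hxz, ← hc, ← hN]
      congr 1
      refine Finset.sum_congr rfl fun β _ => ?_
      congr 1
      ext j
      simp only [mon, Pi.smul_apply, smul_eq_mul, y, hη, mul_pow, Finset.prod_mul_distrib,
          Finset.prod_pow_eq_pow_sum])
  have hdetM : M.det = (∏ j, b j ^ k) *
      (((Matrix.of fun i j : A => ∏ m, (ξ j m) ^ (i.1 m)).det : ℤ) : ℤ_[p]) := by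
    have h1 : (((Matrix.of fun i j : A => ∏ m, (ξ j m) ^ (i.1 m)).det : ℤ) : ℤ_[p]) =
        ((Matrix.of fun i j : A => ∏ m, (ξ j m : ℤ_[p]) ^ (i.1 m))).det := by
      have := RingHom.map_det (Int.castRingHom ℤ_[p]) (Matrix.of fun i j : A => ∏ m, (ξ j m) ^ (i.1 m))
      rw [eq_intCast] at this
      rw [this]
      congr 1
      ext i j
      simp
    rw [h1, ← Matrix.det_mul_row]
    congr 1
    ext i j
    simp only [M, Matrix.of_apply]
    rw [aux_prod_scale _ _ _ (hA i.1 i.2)]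
  rw [hdetM] at hdvd
  have hunit : IsUnit (∏ j, b j ^ k) := by
    exact IsUnit.prod_univ_iff.2 fun j => (hbu j).pow k
  rw [hunit.dvd_mul_left] at hdvd
  rw [← PadicInt.pow_p_dvd_int_iff]
  refine (pow_dvd_pow _ ?_).trans hdvd
  rw [Fintype.card_coe]
  have h1 := aux_good_sum n J γ m0 hγ.1.1
  have h2 : ∑ β : auxGood n J γ m0, (J - ∑ i, β.1 i) = ∑ β ∈ auxGood n J γ m0, (J - ∑ i, β i) :=
    Finset.sum_coe_sort (auxGood n J γ m0) (fun β => J - ∑ i, β i)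
  rw [h2]
  have h3 : (∑ i, γ i) * (J + n).choose n ≤ μ * (J + n).choose n := Nat.mul_le_mul_right _ hγdeg
  omega

lemma aux_exists_k (n d : ℕ) (δ : ℝ) (hδ : 0 < δ) : ∃ k : ℕ, d + 1 ≤ k ∧
    ((k : ℝ) + n + d + 1) ^ n ≤ (1 + δ) * ((k : ℝ) - d) ^ n := by
  have h1 : Filter.Tendsto (fun m : ℕ => (1 + ((n : ℝ) + 2 * d + 1) / m) ^ n) Filter.atTop (nhds ((1 + 0) ^ n)) := by
    exact ((tendsto_const_div_atTop_nhds_zero_nat _).const_add 1).pow n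
  rw [add_zero, one_pow] at h1
  have h2 := h1.eventually (eventually_le_nhds (show (1 : ℝ) < 1 + δ by linarith))
  obtain ⟨m, hm, hm1⟩ := (h2.and (Filter.eventually_ge_atTop 1)).exists
  have hm0 : (0 : ℝ) < m := by exact_mod_cast hm1
  refine ⟨m + d, by omega, ?_⟩
  push_cast
  rw [add_sub_cancel_right]
  calc ((m : ℝ) + d + n + d + 1) ^ n = (1 + ((n : ℝ) + 2 * d + 1) / m) ^ n * m ^ n := by
        rw [← mul_pow]; congr 1; field_simp; ring
    _ ≤ _ := by gcongr

lemma aux_analytic_sigma (n d k s σ α : ℕ) (hn : 2 ≤ n) (hd : 1 ≤ d) (hk : d + 1 ≤ k) (hα : α ≤ d) (δ : ℝ)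
    (hδ : 0 < δ) (hkk : ((k : ℝ) + n + d + 1) ^ n ≤ (1 + δ) * ((k : ℝ) - d) ^ n)
    (hs : (d : ℝ) * ((k : ℝ) - d) ^ (n - 1) ≤ s * (n - 1).factorial)
    (hσ : n * σ ≤ ((d - α) * k + n * (d * d)) * (k + n - 1).choose (n - 1)) :
    (σ : ℝ) ≤ k * s * (((d : ℝ) - α) / ((n : ℝ) * d) + δ) := by
  have hf : (0 : ℝ) < (n - 1).factorial := by exact_mod_cast Nat.factorial_pos _
  have hc : (((k + n - 1).choose (n - 1) : ℕ) : ℝ) ≤ ((k + n : ℝ)) ^ (n - 1) / (n - 1).factorial := by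
    refine (Nat.choose_le_pow_div (n - 1) (k + n - 1)).trans ?_
    gcongr
    have : k + n - 1 ≤ k + n := by omega
    exact_mod_cast this
  have hσ' : (n : ℝ) * σ ≤ (((d : ℝ) - α) * k + n * (d * d)) * ((k + n - 1).choose (n - 1) : ℕ) := by
    rw [← Nat.cast_sub hα]
    exact_mod_cast hσ
  have hn0 : (2 : ℝ) ≤ n := by exact_mod_cast hn
  have hd0 : (1 : ℝ) ≤ d := by exact_mod_cast hd
  have hk0 : (d : ℝ) + 1 ≤ k := by exact_mod_cast hk
  have hα0 : (α : ℝ) ≤ d := by exact_mod_cast hα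
  have hα1 : (0 : ℝ) ≤ α := by positivity
  obtain ⟨r, rfl⟩ : ∃ r, n = r + 1 := ⟨n - 1, by omega⟩
  simp only [Nat.add_sub_cancel] at *
  set Q : ℝ := ((k : ℝ) - d) ^ r with hQ
  have hQ0 : 0 < Q := by rw [hQ]; apply pow_pos; linarith
  -- key
  have hkey : ((k : ℝ) + (r + 1 : ℕ)) ^ r * (k + d) ≤ (1 + δ) * (k * Q) := by
    calc ((k : ℝ) + (r + 1 : ℕ)) ^ r * (k + d) ≤ ((k : ℝ) + (r + 1 : ℕ) + d + 1) ^ r * ((k : ℝ) + (r + 1 : ℕ) + d + 1) := by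
          apply mul_le_mul
          · apply pow_le_pow_left₀ (by positivity); linarith
          · linarith
          · positivity
          · positivity
      _ = ((k : ℝ) + (r + 1 : ℕ) + d + 1) ^ (r + 1) := by rw [pow_succ]
      _ ≤ _ := hkk
      _ = (1 + δ) * (((k : ℝ) - d) * Q) := by rw [pow_succ]; ring
      _ ≤ _ := by gcongr; linarith
  have hQR : Q ≤ ((k : ℝ) + (r + 1 : ℕ)) ^ r := by
    rw [hQ]; gcongr
    · linarith
    · linarith
  set R := ((k : ℝ) + (r + 1 : ℕ)) ^ r with hR
  set N : ℝ := ((r + 1 : ℕ) : ℝ) with hN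
  set c : ℝ := (((k + (r + 1) - 1).choose r : ℕ) : ℝ) with hcc
  set f : ℝ := (r.factorial : ℝ) with hff
  have hcf : c * f ≤ R := by rwa [le_div_iff₀ hf] at hc
  -- N σ f d Q ≤ ((d-α)k + N d d) R d Q
  have hX : 0 ≤ ((d : ℝ) - α) * k + N * (d * d) := by
    have : 0 ≤ ((d : ℝ) - α) := by linarith
    positivity
  have h1 : N * σ * f ≤ (((d : ℝ) - α) * k + N * (d * d)) * R := by
    calc N * σ * f ≤ ((((d : ℝ) - α) * k + N * (d * d)) * c) * f := by gcongr
      _ = (((d : ℝ) - α) * k + N * (d * d)) * (c * f) := by ring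
      _ ≤ _ := by gcongr
  have h2 : (((d : ℝ) - α) * k + N * (d * d)) * R ≤ k * Q * (((d : ℝ) - α) + N * d * δ) := by
    have h3 : ((d : ℝ) - α) * (R - Q) ≤ N * d * (R - Q) := by
      apply mul_le_mul_of_nonneg_right _ (by linarith)
      nlinarith
    have h4 := mul_le_mul_of_nonneg_left h3 (show (0:ℝ) ≤ k by positivity)
    have h5 : N * d * (R * (k + d)) ≤ N * d * ((1 + δ) * (k * Q)) := by gcongr
    linarith
  have h6 : N * σ * f * d ≤ k * (s * f) * (((d : ℝ) - α) + N * d * δ) := by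
    have h8 : 0 ≤ (((d : ℝ) - α) + N * d * δ) := by
      have : 0 ≤ ((d : ℝ) - α) := by linarith
      positivity
    calc N * σ * f * d ≤ (k * Q * (((d : ℝ) - α) + N * d * δ)) * d := by
          apply mul_le_mul_of_nonneg_right (h1.trans h2); linarith
      _ = k * (d * Q) * (((d : ℝ) - α) + N * d * δ) := by ring
      _ ≤ _ := by gcongr
  have h7 : (σ : ℝ) * (N * d) ≤ (k * s * (((d : ℝ) - α) / (N * d) + δ)) * (N * d) := by
    have : (k * s * (((d : ℝ) - α) / (N * d) + δ)) * (N * d) = k * s * (((d : ℝ) - α) + N * d * δ) := by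
      field_simp
    rw [this]
    refine le_of_mul_le_mul_right ?_ hf
    linarith
  exact le_of_mul_le_mul_right h7 (by positivity)

lemma aux_analytic_e (n d k s μ : ℕ) (hn : 2 ≤ n) (hd : 1 ≤ d) (hk : d + 1 ≤ k) (hμ : 1 ≤ μ) (hμd : μ ≤ d) (δ : ℝ)
    (hδ : 0 < δ) (hkk : ((k : ℝ) + n + d + 1) ^ n ≤ (1 + δ) * ((k : ℝ) - d) ^ n)
    (hs : (d : ℝ) * ((k : ℝ) - d) ^ (n - 1) ≤ s * (n - 1).factorial) (θ : ℝ)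
    (hθ : θ = ((d : ℝ) / μ) ^ ((1 : ℝ) / ((n : ℝ) - 1))) :
    (1 - δ) * θ * (k * s * ((n - 1) / n)) ≤ ((s * ⌈θ * k⌉₊ - μ * (⌈θ * k⌉₊ + n).choose n : ℕ) : ℝ) := by
  have hμ0 : (1 : ℝ) ≤ μ := by exact_mod_cast hμ
  have hμd0 : (μ : ℝ) ≤ d := by exact_mod_cast hμd
  have hn0 : (2 : ℝ) ≤ n := by exact_mod_cast hn
  have hd0 : (1 : ℝ) ≤ d := by exact_mod_cast hd
  have hk0 : (d : ℝ) + 1 ≤ k := by exact_mod_cast hk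
  have hθ1 : 1 ≤ θ := by
    rw [hθ]
    apply Real.one_le_rpow
    · rw [le_div_iff₀ (by linarith)]; linarith
    · apply div_nonneg <;> linarith
  obtain ⟨r, rfl⟩ : ∃ r, n = r + 1 := ⟨n - 1, by omega⟩
  simp only [Nat.add_sub_cancel] at *
  have hr : (r : ℝ) ≠ 0 := by
    have : r ≠ 0 := by omega
    exact_mod_cast this
  have hθr : μ * θ ^ r = d := by
    rw [hθ, ← Real.rpow_natCast, ← Real.rpow_mul (by positivity)]
    have : (1 : ℝ) / (((r + 1 : ℕ) : ℝ) - 1) * r = 1 := by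
      rw [Nat.cast_add, Nat.cast_one, add_sub_cancel_right]; field_simp
    rw [this, Real.rpow_one]
    field_simp
  set J := ⌈θ * k⌉₊ with hJ
  have hJ1 : θ * k ≤ J := Nat.le_ceil _
  have hJ2 : (J : ℝ) < θ * k + 1 := Nat.ceil_lt_add_one (by positivity)
  set N : ℝ := ((r + 1 : ℕ) : ℝ) with hN
  set f : ℝ := (r.factorial : ℝ) with hff
  have hf : (0 : ℝ) < f := by rw [hff]; exact_mod_cast Nat.factorial_pos _
  have hc : (((J + (r + 1)).choose (r + 1) : ℕ) : ℝ) * (N * f) ≤ (θ * (k + N + d + 1)) ^ (r + 1) := by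
    have := Nat.choose_le_pow_div (α := ℝ) (r + 1) (J + (r + 1))
    rw [le_div_iff₀ (by exact_mod_cast Nat.factorial_pos _), Nat.factorial_succ, Nat.cast_mul] at this
    refine this.trans ?_
    gcongr
    push_cast [hN] at *
    nlinarith
  have h1 : (μ : ℝ) * (((J + (r + 1)).choose (r + 1) : ℕ) : ℝ) * (N * f) ≤ θ * (1 + δ) * k * (s * f) := by
    calc (μ : ℝ) * (((J + (r + 1)).choose (r + 1) : ℕ) : ℝ) * (N * f)
        = μ * ((((J + (r + 1)).choose (r + 1) : ℕ) : ℝ) * (N * f)) := by ring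
      _ ≤ μ * (θ * (k + N + d + 1)) ^ (r + 1) := by gcongr
      _ = (μ * θ ^ r) * θ * ((k : ℝ) + N + d + 1) ^ (r + 1) := by rw [mul_pow]; ring
      _ ≤ (μ * θ ^ r) * θ * ((1 + δ) * ((k : ℝ) - d) ^ (r + 1)) := by gcongr
      _ = θ * (1 + δ) * ((k : ℝ) - d) * (d * ((k : ℝ) - d) ^ r) := by rw [hθr]; ring
      _ ≤ θ * (1 + δ) * k * (s * f) := by
        have : 0 ≤ (k : ℝ) - d := by linarith
        gcongr
        linarith
  have h2 : (μ : ℝ) * (((J + (r + 1)).choose (r + 1) : ℕ) : ℝ) ≤ θ * (1 + δ) * k * s / N := by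
    rw [le_div_iff₀ (by linarith)]
    refine le_of_mul_le_mul_right ?_ hf
    linarith
  have h3 : ((s * J : ℕ) : ℝ) - ((μ * (J + (r + 1)).choose (r + 1) : ℕ) : ℝ) ≤
      ((s * J - μ * (J + (r + 1)).choose (r + 1) : ℕ) : ℝ) := by
    rw [sub_le_iff_le_add]
    have : s * J ≤ (s * J - μ * (J + (r + 1)).choose (r + 1)) + μ * (J + (r + 1)).choose (r + 1) := by omega
    exact_mod_cast this
  refine le_trans ?_ h3
  push_cast
  have h4 : (s : ℝ) * (θ * k) ≤ s * J := by gcongr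
  have h5 : (1 - δ) * θ * (k * s * ((N - 1) / N)) ≤ s * (θ * k) - θ * (1 + δ) * k * s / N := by
    have hNp : 0 < N := by linarith
    have : s * (θ * k) - θ * (1 + δ) * k * s / N - (1 - δ) * θ * (k * s * ((N - 1) / N)) =
      (θ * k * s) * (δ * (N - 2) / N) := by field_simp; ring
    have h6 : 0 ≤ (θ * k * s) * (δ * (N - 2) / N) := by
      have : 0 ≤ N - 2 := by linarith
      positivity
    linarith
  linarith

lemma aux_logs {N t : ℕ} (n k s : ℕ) (hn : 2 ≤ n) (hks : 1 ≤ k * s) (ε δ : ℝ) (hε : 0 < ε) (hδ0 : 0 < δ) (hδ1 : δ ≤ 1 / 2)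
    (hδ2 : δ ≤ ε / 16) (B a : Fin N → ℝ) (hB : ∀ m, 1 ≤ B m) (ha1 : ∀ m, a m ≤ 1)
    (p : Fin t → ℕ) (hp : ∀ i, (p i).Prime) (θ : Fin t → ℝ) (e : Fin t → ℕ) (σ : Fin N → ℕ)
    (he : ∀ i, (1 - δ) * θ i * (k * s * (((n : ℝ) - 1) / n)) ≤ e i)
    (hσ : ∀ m, (σ m : ℝ) ≤ k * s * (a m + δ)) (M : ℝ) (hM : 1 ≤ M)
    (hmain : ∏ i, (p i : ℝ) ^ (e i) ≤ M * ∏ m, B m ^ σ m)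
    (hyp : ∏ i, (p i : ℝ) ^ (θ i)
          ≥ (∏ m, B m ^ a m) ^ ((n : ℝ) / ((n : ℝ) - 1)) * (∏ m, B m) ^ ε) :
    ∀ m, B m ≤ Real.exp (8 * Real.log M / ε) := by
  have hBp : ∀ m, 0 < B m := fun m => by linarith [hB m]
  have hpp : ∀ i, (0 : ℝ) < p i := fun i => by exact_mod_cast (hp i).pos
  have hn0 : (2 : ℝ) ≤ n := by exact_mod_cast hn
  have hL : ∀ m, 0 ≤ Real.log (B m) := fun m => Real.log_nonneg (hB m)
  have hlp : ∀ i, 0 ≤ Real.log (p i) := fun i => Real.log_nonneg (by exact_mod_cast (hp i).one_le)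
  have h1 := Real.log_le_log (Finset.prod_pos fun i _ => pow_pos (hpp i) _) hmain
  rw [Real.log_mul (by linarith) (Finset.prod_pos fun m _ => pow_pos (hBp m) _).ne',
    Real.log_prod (fun i _ => (pow_pos (hpp i) _).ne'), Real.log_prod (fun m _ => (pow_pos (hBp m) _).ne')] at h1
  simp only [Real.log_pow] at h1
  have hPa : 0 < ∏ m, B m ^ a m := Finset.prod_pos fun m _ => Real.rpow_pos_of_pos (hBp m) _
  have hPB : 0 < ∏ m, B m := Finset.prod_pos fun m _ => hBp m
  have h2 := Real.log_le_log (mul_pos (Real.rpow_pos_of_pos hPa _) (Real.rpow_pos_of_pos hPB _)) hyp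
  rw [Real.log_mul (Real.rpow_pos_of_pos hPa _).ne' (Real.rpow_pos_of_pos hPB _).ne', Real.log_rpow hPa,
    Real.log_rpow hPB, Real.log_prod (fun m _ => (Real.rpow_pos_of_pos (hBp m) _).ne'),
    Real.log_prod (fun m _ => (hBp m).ne'),
    Real.log_prod (fun i _ => (Real.rpow_pos_of_pos (hpp i) _).ne')] at h2
  simp only [Real.log_rpow (hBp _), Real.log_rpow (hpp _)] at h2
  set T := ∑ m, Real.log (B m) with hT
  set D := ∑ m, a m * Real.log (B m) with hD
  set P := ∑ i, θ i * Real.log (p i) with hP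
  have hT0 : 0 ≤ T := Finset.sum_nonneg fun m _ => hL m
  have hDT : D ≤ T := Finset.sum_le_sum fun m _ => by nlinarith [hL m, ha1 m]
  set K : ℝ := (k : ℝ) * s with hK
  have hK1 : 1 ≤ K := by rw [hK]; exact_mod_cast hks
  have h3 : (1 - δ) * (K * (((n : ℝ) - 1) / n)) * P ≤ ∑ i, (e i : ℝ) * Real.log (p i) := by
    rw [hP, Finset.mul_sum]
    refine Finset.sum_le_sum fun i _ => ?_
    have := mul_le_mul_of_nonneg_right (he i) (hlp i)
    linarith
  have h4 : ∑ m, (σ m : ℝ) * Real.log (B m) ≤ K * (D + δ * T) := by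
    rw [hD, hT, Finset.mul_sum, ← Finset.sum_add_distrib, Finset.mul_sum]
    refine Finset.sum_le_sum fun m _ => ?_
    have := mul_le_mul_of_nonneg_right (hσ m) (hL m)
    linarith
  set c : ℝ := ((n : ℝ) - 1) / n with hc
  have hc1 : 1 / 2 ≤ c := by rw [hc, div_le_div_iff₀ (by norm_num) (by linarith)]; linarith
  have hc2 : c * ((n : ℝ) / (n - 1)) = 1 := by
    rw [hc]; have : (n : ℝ) - 1 ≠ 0 := by linarith
    field_simp
  have h5 : (1 - δ) * K * (D + c * ε * T) ≤ (1 - δ) * (K * c) * P := by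
    have : D + c * ε * T = c * ((n : ℝ) / (n - 1) * D + ε * T) := by
      linear_combination (-D) * hc2
    rw [this]
    have h0 : 0 ≤ (1 - δ) * (K * c) := by
      have : 0 ≤ 1 - δ := by linarith
      positivity
    have := mul_le_mul_of_nonneg_left h2 h0
    linarith
  have h6 : K * ((1 - δ) * c * ε * T) ≤ Real.log M + K * (2 * δ * T) := by
    have : K * δ * D ≤ K * δ * T := by gcongr
    linarith
  have h7 : ε / 4 ≤ (1 - δ) * c * ε := by
    have : 1 / 2 * (1 / 2) ≤ (1 - δ) * c := by
      apply mul_le_mul <;> linarith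
    nlinarith
  have h8 : K * (ε / 8 * T) ≤ Real.log M := by
    have : ε / 8 * T ≤ ((1 - δ) * c * ε - 2 * δ) * T := by
      apply mul_le_mul_of_nonneg_right _ hT0; linarith
    have := mul_le_mul_of_nonneg_left this (show 0 ≤ K by linarith)
    linarith
  have h9 : ε / 8 * T ≤ Real.log M := by
    refine le_trans ?_ h8
    have : 0 ≤ ε / 8 * T := by positivity
    nlinarith
  intro m
  rw [← Real.log_le_iff_le_exp (hBp m)]
  have h10 : Real.log (B m) ≤ T := Finset.single_le_sum (fun m _ => hL m) (Finset.mem_univ m)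
  refine h10.trans ?_
  rw [le_div_iff₀ hε]
  linarith

lemma aux_choose_big (X n : ℕ) (hn : 2 ≤ n) : X < (X + n).choose (n - 1) := by
  obtain ⟨r, rfl⟩ : ∃ r, n = r + 2 := ⟨n - 2, by omega⟩
  rw [show X + (r + 2) = (X + 1) + (r + 1) by ring, show r + 2 - 1 = r + 1 by omega, ← Nat.choose_symm_add]
  have h := Nat.choose_le_choose (X + 1) (show X + 1 + 1 ≤ X + 1 + (r + 1) by omega)
  rw [Nat.choose_succ_self_right] at h
  omega

lemma aux_box {N : ℕ} (A : Finset (Fin N →₀ ℕ)) (ξ : A → Fin N → ℤ) (R : ℕ)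
    (hR : ∀ j m, |ξ j m| ≤ R)
    (hdet : (Matrix.of fun i j : A => ∏ m, (ξ j m) ^ (i.1 m)).det ≠ 0) :
    A.card ≤ (2 * R + 1) ^ N := by
  classical
  have hinj : Function.Injective ξ := by
    intro i j hij
    by_contra hne
    exact hdet (Matrix.det_zero_of_column_eq hne fun l => by simp [hij])
  have h := Finset.card_le_card_of_injOn (s := (Finset.univ : Finset A))
    (t := Fintype.piFinset fun _ : Fin N => Finset.Icc (-(R : ℤ)) R) ξ
    (fun j _ => by
      simp only [Finset.mem_coe, Fintype.mem_piFinset, Finset.mem_Icc]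
      exact fun m => abs_le.1 (hR j m)) hinj.injOn
  rw [Finset.card_univ, Fintype.card_coe, Fintype.card_piFinset] at h
  simp only [Int.card_Icc, Finset.prod_const, Finset.card_univ, Fintype.card_fin] at h
  rwa [show ((R : ℤ) + 1 - -(R : ℤ)).toNat = 2 * R + 1 by omega] at h

lemma aux_mu_le {N d p μ : ℕ} (F : MvPolynomial (Fin N) ℤ) (hF : F.IsHomogeneous d) (v : Fin N → ZMod p)
    (h : MultiplicityAt p F v μ) : μ ≤ d := by
  by_contra hlt
  push Not at hlt
  exact h.2 (homogeneousComponent_eq_zero _ _ ((aux_totalDegree _ (hF.map _) v).trans_lt hlt))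

lemma aux_finish {n k : ℕ} (F : MvPolynomial (Fin (n + 1)) ℤ)
    (lo : LinearOrder (Fin (n + 1) →₀ ℕ))
    (hadd : ∀ α β γ : Fin (n + 1) →₀ ℕ, lo.lt α β → lo.lt (α + γ) (β + γ))
    (αs : Fin (n + 1) →₀ ℕ) (hα : αs ∈ F.support) (hmax : ∀ β ∈ F.support, lo.le β αs)
    (G : MvPolynomial (Fin (n + 1)) ℚ) (hG : G ≠ 0)
    (hs : G.support ⊆ (Finset.univ.finsuppAntidiag k).filter (fun β => ¬ ∀ m, αs m ≤ β m)) :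
    G.IsHomogeneous k ∧ ¬ (MvPolynomial.map (Int.castRingHom ℚ) F ∣ G) := by
  have hinj : Function.Injective (Int.castRingHom ℚ) := (Int.castRingHom ℚ).injective_int
  constructor
  · intro β hβ
    have := (Finset.mem_filter.1 (hs (mem_support_iff.2 hβ))).1
    rw [Finset.mem_finsuppAntidiag] at this
    rw [Finsupp.weight_apply, Finsupp.sum_fintype _ _ (by simp)]
    simpa using this.1
  · refine aux_not_dvd _ G lo hadd αs ?_ ?_ hG fun β hβ => (Finset.mem_filter.1 (hs hβ)).2
    · rwa [support_map_of_injective _ hinj]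
    · rwa [support_map_of_injective _ hinj]

theorem stmt_9 (n d : ℕ) (hn : 2 ≤ n) (hd : 1 ≤ d) (ε : ℝ) (hε : 0 < ε) :
    ∃ C : ℕ, ∀ F : MvPolynomial (Fin (n + 1)) ℤ,
      (∀ c : ℤ, (∀ m, c ∣ F.coeff m) → IsUnit c) →
      F.IsHomogeneous d →
      Irreducible (MvPolynomial.map (Int.castRingHom ℚ) F) →
      ∀ lo : LinearOrder (Fin (n + 1) →₀ ℕ),
        (∀ α : Fin (n + 1) →₀ ℕ, lo.le 0 α) →
        (∀ α β γ : Fin (n + 1) →₀ ℕ, lo.lt α β → lo.lt (α + γ) (β + γ)) →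
        (∀ α β : Fin (n + 1) →₀ ℕ, lo.le α β → (∑ i, α i) ≤ ∑ i, β i) →
      ∀ αs : Fin (n + 1) →₀ ℕ, αs ∈ F.support → (∀ β ∈ F.support, lo.le β αs) →
      ∀ a : Fin (n + 1) → ℝ, (∀ m, a m = ((d : ℝ) - αs m) / ((n : ℝ) * d)) →
      ∀ B : Fin (n + 1) → ℝ, (∀ m, 1 ≤ B m) →
      ∀ t : ℕ, ∀ p : Fin t → ℕ, (∀ i, (p i).Prime) → Function.Injective p →
      ∀ v : (i : Fin t) → Fin (n + 1) → ZMod (p i), (∀ i, v i ≠ 0) →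
      ∀ μ : Fin t → ℕ, (∀ i, 1 ≤ μ i) → (∀ i, MultiplicityAt (p i) F (v i) (μ i)) →
      (∏ i, (p i : ℝ) ^ (((d : ℝ) / μ i) ^ ((1 : ℝ) / ((n : ℝ) - 1)))
          ≥ (∏ m, B m ^ a m) ^ ((n : ℝ) / ((n : ℝ) - 1)) * (∏ m, B m) ^ ε) →
      ∃ G : MvPolynomial (Fin (n + 1)) ℚ, ∃ e ≤ C, G.IsHomogeneous e ∧
        ¬ (MvPolynomial.map (Int.castRingHom ℚ) F ∣ G) ∧
        ∀ ξ : Fin (n + 1) → ℤ, Finset.univ.gcd ξ = 1 →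
          (∀ m, (|ξ m| : ℝ) ≤ B m) → eval ξ F = 0 →
          (∀ i, ReducesTo (p i) ξ (v i)) →
          eval (fun m => (ξ m : ℚ)) G = 0 := by
  obtain ⟨δ, hδ0, hδ1, hδ2⟩ : ∃ δ : ℝ, 0 < δ ∧ δ ≤ 1 / 2 ∧ δ ≤ ε / 16 :=
    ⟨min (1 / 2) (ε / 16), lt_min (by norm_num) (by linarith), min_le_left _ _, min_le_right _ _⟩
  obtain ⟨k, hk, hkk⟩ := aux_exists_k n d δ hδ0
  set M : ℝ := (((k + n).choose n).factorial : ℝ) with hM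
  have hM1 : 1 ≤ M := by rw [hM]; exact_mod_cast Nat.factorial_pos _
  set W : ℝ := Real.exp (8 * Real.log M / ε) with hW
  set R : ℕ := ⌈W⌉₊ with hR
  set k2 : ℕ := (2 * R + 1) ^ (n + 1) + d with hk2
  refine ⟨max k k2, ?_⟩
  intro F _ hF _ lo _ hadd _ αs hα hmax a ha B hB t p hp hpinj v hv μ hμ1 hμ hyp
  have hαd : ∑ i, αs i = d := by
    have := hF (mem_support_iff.1 hα)
    rw [Finsupp.weight_apply, Finsupp.sum_fintype _ _ (by simp)] at this
    simpa using this
  have hαm : ∀ m, αs m ≤ d := fun m => by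
    rw [← hαd]; exact Finset.single_le_sum (f := fun i => αs i) (fun _ _ => Nat.zero_le _) (Finset.mem_univ m)
  let S : Set (Fin (n + 1) → ℤ) := {ξ | (∀ m, (|ξ m| : ℝ) ≤ B m) ∧ eval ξ F = 0 ∧
    ∀ i, ReducesTo (p i) ξ (v i)}
  by_cases hBW : ∀ m, B m ≤ W
  · -- small box
    let A := (Finset.univ.finsuppAntidiag k2).filter (fun β : Fin (n + 1) →₀ ℕ => ¬ ∀ m, αs m ≤ β m)
    rcases aux_dichotomy A S with ⟨G, hG, hGs, hGv⟩ | ⟨ξ, hξS, hdet⟩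
    · obtain ⟨h1, h2⟩ := aux_finish F lo hadd αs hα hmax G hG hGs
      exact ⟨G, k2, le_max_right _ _, h1, h2, fun ξ _ hb h0 hr => hGv ξ ⟨hb, h0, hr⟩⟩
    · exfalso
      have h1 := aux_box A ξ R (fun j m => by
        have h := ((hξS j).1 m).trans ((hBW m).trans (Nat.le_ceil W))
        exact_mod_cast h) hdet
      have h2 := aux_card_mon_ge n k2 d (by omega) αs hαd (by omega)
      have h3 := aux_choose_big ((2 * R + 1) ^ (n + 1)) n hn
      rw [show k2 - d = (2 * R + 1) ^ (n + 1) by omega] at h2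
      have h4 : (((2 * R + 1) ^ (n + 1)) + n).choose (n - 1) ≤ d * (((2 * R + 1) ^ (n + 1)) + n).choose (n - 1) :=
        Nat.le_mul_of_pos_left _ hd
      exact absurd (h4.trans (h2.trans h1)) (by omega)
  · let A := (Finset.univ.finsuppAntidiag k).filter (fun β : Fin (n + 1) →₀ ℕ => ¬ ∀ m, αs m ≤ β m)
    rcases aux_dichotomy A S with ⟨G, hG, hGs, hGv⟩ | ⟨ξ, hξS, hdet⟩
    · obtain ⟨h1, h2⟩ := aux_finish F lo hadd αs hα hmax G hG hGs
      exact ⟨G, k, le_max_left _ _, h1, h2, fun ξ _ hb h0 hr => hGv ξ ⟨hb, h0, hr⟩⟩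
    · exfalso
      apply hBW
      have hcard := aux_card_mon_ge n k d (by omega) αs hαd (by omega)
      have hcard2 := aux_card_mon n k d αs hαd (by omega)
      change _ ≤ A.card at hcard
      change A.card + _ = _ at hcard2
      have hApos : 1 ≤ A.card := by
        refine le_trans ?_ hcard
        exact Nat.mul_pos hd (Nat.choose_pos (by omega))
      have hs : (d : ℝ) * ((k : ℝ) - d) ^ (n - 1) ≤ A.card * (n - 1).factorial := by
        have h1 := Nat.pow_le_choose (α := ℝ) (n - 1) (k - d + n)
        rw [div_le_iff₀ (by exact_mod_cast Nat.factorial_pos _)] at h1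
        have h2 : ((k : ℝ) - d) ^ (n - 1) ≤ (((k - d + n + 1 - (n - 1) : ℕ) : ℝ)) ^ (n - 1) := by
          rw [← Nat.cast_sub (by omega)]
          apply pow_le_pow_left₀ (Nat.cast_nonneg _)
          exact Nat.cast_le.2 (by omega)
        have h3 : ((d * (k - d + n).choose (n - 1) : ℕ) : ℝ) ≤ A.card := by exact_mod_cast hcard
        rw [Nat.cast_mul] at h3
        calc (d : ℝ) * ((k : ℝ) - d) ^ (n - 1) ≤ d * (((k - d + n).choose (n - 1) : ℕ) * (n - 1).factorial) := by
              gcongr; exact h2.trans h1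
          _ = (d * ((k - d + n).choose (n - 1) : ℕ)) * (n - 1).factorial := by ring
          _ ≤ _ := by gcongr
      have hAdeg : ∀ β ∈ A, ∑ i, β i = k := fun β hβ => by
        have := (Finset.mem_filter.1 hβ).1
        rw [Finset.mem_finsuppAntidiag] at this
        exact this.1
      let θ : Fin t → ℝ := fun i => ((d : ℝ) / μ i) ^ ((1 : ℝ) / ((n : ℝ) - 1))
      let e : Fin t → ℕ := fun i => A.card * ⌈θ i * k⌉₊ - μ i * (⌈θ i * k⌉₊ + n).choose n
      refine aux_logs n k A.card hn (Nat.mul_pos (by omega) hApos) ε δ hε hδ0 hδ1 hδ2 B a hB ?_ p hp θ e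
        (fun m => ∑ β ∈ A, β m) ?_ ?_ M hM1 ?_ hyp
      · intro m
        rw [ha]
        have hn0 : (2 : ℝ) ≤ n := by exact_mod_cast hn
        have hd0 : (1 : ℝ) ≤ d := by exact_mod_cast hd
        have : (0 : ℝ) ≤ αs m := by positivity
        rw [div_le_one (by positivity)]
        nlinarith
      · intro i
        exact aux_analytic_e n d k A.card (μ i) hn hd hk (hμ1 i) (aux_mu_le F hF (v i) (hμ i)) δ hδ0 hkk hs
          (θ i) rfl
      · intro m
        rw [ha]
        exact aux_analytic_sigma n d k A.card _ (αs m) hn hd hk (hαm m) δ hδ0 hkk hs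
          (aux_sigma n k d (by omega) αs hαd m)
      · have harch := aux_arch A ξ B (fun j m => (hξS j).1 m)
        have hdvd : (∏ i, ((p i : ℤ)) ^ e i) ∣ (Matrix.of fun i j : A => ∏ m, (ξ j m) ^ (i.1 m)).det := by
          apply Finset.prod_dvd_of_coprime
          · intro i _ j _ hij
            apply IsCoprime.pow
            rw [Nat.isCoprime_iff_coprime]
            exact (Nat.coprime_primes (hp i) (hp j)).2 fun h => hij (hpinj h)
          · intro i _
            exact aux_padic (p i) (hp i) F hF (v i) (hv i) (μ i) (hμ i) A hAdeg ξ (fun j => (hξS j).2.1)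
              (fun j => (hξS j).2.2 i) _
        have h1 := Int.le_of_dvd (abs_pos.2 hdet) ((dvd_abs _ _).2 hdvd)
        have h2 : ∏ i, (p i : ℝ) ^ (e i) ≤ |((Matrix.of fun i j : A => ∏ m, (ξ j m) ^ (i.1 m)).det : ℝ)| := by
          exact_mod_cast h1
        refine h2.trans (harch.trans ?_)
        have h3 : ((A.card.factorial : ℕ) : ℝ) ≤ M := by
          rw [hM]
          exact_mod_cast Nat.factorial_le (by omega)
        have h4 : 0 ≤ ∏ m, B m ^ (∑ β ∈ A, β m) :=
          Finset.prod_nonneg fun m _ => pow_nonneg (by linarith [hB m]) _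
        exact mul_le_mul_of_nonneg_right h3 h4
end
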